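/- arXiv:1910.02417 — 3 statements merged into one kernel-verified Lean document; each statement's English description precedes it below -/
import Mathlib

section
/- A finite multiset of n ≥ 6 triples admits a nice two-coloring if and only if it is fair and non-special. -/
/-- `f` is a *nice (total) `c`-coloring* of the multiset `T` of tuples: the color
classes `f j` sum to `T`, and for each color `j` and every element `i` appearing in
some tuple of `T` there is a tuple of color `j` not containing `i`. -/
def NiceColoring (c : ℕ) (T : Multiset (Finset ℕ+))
    (f : Fin c → Multiset (Finset ℕ+)) : Prop :=
  (∑ j, f j) = T ∧
  ∀ j : Fin c, ∀ i : ℕ+, (∃ t ∈ T, i ∈ t) → ∃ t ∈ f j, i ∉ t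

/-- `T` is *`c`-fair*: every element appearing in some tuple of `T` is absent from at
least `c` of the tuples (counted with multiplicity). -/
def CFair (c : ℕ) (T : Multiset (Finset ℕ+)) : Prop :=
  ∀ i : ℕ+, (∃ t ∈ T, i ∈ t) →
    c ≤ Multiset.card (T.filter (fun t => i ∉ t))

/-- A multiset `T` of `n` triples is *special*: for some three distinct elements
`a, b, c` it consists of `n - 3` copies of the triple `{a, b, c}` together with three
further triples, one containing `a`, one containing `b` and one containing `c`, whose
other elements are distinct from `a`, `b`, `c`. -/
def Special (T : Multiset (Finset ℕ+)) : Prop :=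
  ∃ a b c : ℕ+, a ≠ b ∧ a ≠ c ∧ b ≠ c ∧
    ∃ t₁ t₂ t₃ : Finset ℕ+,
      T = Multiset.replicate (Multiset.card T - 3) {a, b, c} + {t₁, t₂, t₃} ∧
      a ∈ t₁ ∧ b ∉ t₁ ∧ c ∉ t₁ ∧
      a ∉ t₂ ∧ b ∈ t₂ ∧ c ∉ t₂ ∧
      a ∉ t₃ ∧ b ∉ t₃ ∧ c ∈ t₃

/-! ### Part 1: exhaustive search for six triples, on bit masks -/

namespace NiceTriples

/-- The bit mask `A` is contained in the bit mask `m`. -/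
def subM (A m : ℕ) : Bool := Nat.beq (Nat.land A m) A

/-- `m` contains one of the two sides of the split `A`. -/
def killsM (A m : ℕ) : Bool := subM A m || subM (Nat.xor 63 A) m

/-- Some vertex lies in at least four of the masks. -/
def overM (L : List ℕ) : Bool :=
  [0, 1, 2, 3, 4, 5].any fun v => Nat.ble 4 (L.filter (fun m => Nat.testBit m v)).length

/-- Three of the masks show that the family is special. -/
def specM (L : List ℕ) : Bool :=
  (List.range 6).any fun p => (List.range p).any fun q =>
    L.any (Nat.beq (63 ^^^ (2 ^ p + 2 ^ q))) && (List.range q).any fun r =>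
    L.any (Nat.beq (63 ^^^ (2 ^ q + 2 ^ r))) && L.any (Nat.beq (63 ^^^ (2 ^ p + 2 ^ r)))

/-- Search over the splits: every split has to be destroyed by some element. -/
def searchM : List ℕ → List ℕ → List ℕ → Bool
  | [], _, L => overM L || specM L
  | A :: sp, ms, L => overM L ||
     if L.any (killsM A) then searchM sp ms L else
      ms.all fun m => !(killsM A m) ||
        searchM sp (ms.filter fun x => !(killsM A x) || Nat.ble x m) (m :: L)

def splitsM : List ℕ := [7, 11, 13, 14, 19, 21, 22, 25, 26, 28, 3, 5, 6, 9, 10, 12, 17, 18,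
  20, 24, 33, 34, 36, 40, 48]

def masksM : List ℕ := [0, 1, 2, 3, 4, 5, 6, 7, 8, 9, 10, 11, 12, 13, 14, 15, 16, 17, 18, 19,
  20, 21, 22, 23, 24, 25, 26, 27, 28, 29, 30, 32, 33, 34, 35, 36, 37, 38, 39, 40, 41, 42, 43,
  44, 45, 46, 48, 49, 50, 51, 52, 53, 54, 56, 57, 58, 60]

set_option maxRecDepth 100000 in
theorem searchM_true : searchM splitsM masksM [] = true := by decide +kernel

/-- The bit mask of six booleans. -/
def enc (b : Fin 6 → Bool) : ℕ :=
  (b 0).toNat + 2 * (b 1).toNat + 4 * (b 2).toNat + 8 * (b 3).toNat + 16 * (b 4).toNat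
    + 32 * (b 5).toNat

theorem enc_testBit (b : Fin 6 → Bool) (v : Fin 6) : (enc b).testBit v = b v := by
  unfold enc
  generalize h0 : b 0 = b0
  generalize h1 : b 1 = b1
  generalize h2 : b 2 = b2
  generalize h3 : b 3 = b3
  generalize h4 : b 4 = b4
  generalize h5 : b 5 = b5
  have key : ∀ b0 b1 b2 b3 b4 b5 : Bool,
      (b0.toNat + 2 * b1.toNat + 4 * b2.toNat + 8 * b3.toNat + 16 * b4.toNat
        + 32 * b5.toNat).testBit 0 = b0 ∧
      (b0.toNat + 2 * b1.toNat + 4 * b2.toNat + 8 * b3.toNat + 16 * b4.toNat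
        + 32 * b5.toNat).testBit 1 = b1 ∧
      (b0.toNat + 2 * b1.toNat + 4 * b2.toNat + 8 * b3.toNat + 16 * b4.toNat
        + 32 * b5.toNat).testBit 2 = b2 ∧
      (b0.toNat + 2 * b1.toNat + 4 * b2.toNat + 8 * b3.toNat + 16 * b4.toNat
        + 32 * b5.toNat).testBit 3 = b3 ∧
      (b0.toNat + 2 * b1.toNat + 4 * b2.toNat + 8 * b3.toNat + 16 * b4.toNat
        + 32 * b5.toNat).testBit 4 = b4 ∧
      (b0.toNat + 2 * b1.toNat + 4 * b2.toNat + 8 * b3.toNat + 16 * b4.toNat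
        + 32 * b5.toNat).testBit 5 = b5 := by decide +kernel
  obtain ⟨k0, k1, k2, k3, k4, k5⟩ := key b0 b1 b2 b3 b4 b5
  fin_cases v
  · exact k0.trans h0.symm
  · exact k1.trans h1.symm
  · exact k2.trans h2.symm
  · exact k3.trans h3.symm
  · exact k4.trans h4.symm
  · exact k5.trans h5.symm

theorem enc_lt (b : Fin 6 → Bool) : enc b < 64 := by
  unfold enc
  have h : ∀ v, (b v).toNat ≤ 1 := fun v => Bool.toNat_le _
  have := h 0; have := h 1; have := h 2; have := h 3; have := h 4; have := h 5
  omega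

theorem masksM_complete : ∀ m < 64,
    2 ≤ (Finset.univ.filter (fun v : Fin 6 => m.testBit v = false)).card → m ∈ masksM := by
  decide +kernel

theorem exists_of_not_subM {A m : ℕ} (hA : A < 64) (h : subM A m = false) :
    ∃ v : Fin 6, A.testBit v = true ∧ m.testBit v = false := by
  by_contra! hc
  have : A &&& m = A := by
    apply Nat.eq_of_testBit_eq
    intro j
    rw [Nat.testBit_land]
    by_cases hj : j < 6
    · have := hc ⟨j, hj⟩
      simp only at this
      cases h1 : A.testBit j <;> simp_all
    · have : A.testBit j = false := by
        apply Nat.testBit_lt_two_pow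
        calc A < 2 ^ 6 := hA
          _ ≤ 2 ^ j := Nat.pow_le_pow_right (by norm_num) (by omega)
      simp [this]
  unfold subM at h
  rw [show Nat.land A m = A &&& m from rfl, this] at h
  simp at h

/-! ### Part 2: indexed families -/

variable {ι : Type*} [DecidableEq ι]

/-- The index set `I` splits into two parts, both with empty common intersection. -/
def Good (t : ι → Finset ℕ+) (I : Finset ι) : Prop :=
  ∃ A ⊆ I, (∀ i, ∃ v ∈ A, i ∉ t v) ∧ (∀ i, ∃ v ∈ I \ A, i ∉ t v)

/-- Special with explicit elements and indices. -/
def SpecAt (t : ι → Finset ℕ+) (I : Finset ι) (a b c : ℕ+) (p q r : ι) : Prop :=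
  a ≠ b ∧ a ≠ c ∧ b ≠ c ∧ p ∈ I ∧ q ∈ I ∧ r ∈ I ∧
    a ∈ t p ∧ b ∉ t p ∧ c ∉ t p ∧ a ∉ t q ∧ b ∈ t q ∧ c ∉ t q ∧
    a ∉ t r ∧ b ∉ t r ∧ c ∈ t r ∧
    ∀ v ∈ I, v ≠ p → v ≠ q → v ≠ r → t v = {a, b, c}

def Spec (t : ι → Finset ℕ+) (I : Finset ι) : Prop :=
  ∃ a b c p q r, SpecAt t I a b c p q r

def maskOf (t : Fin 6 → Finset ℕ+) (i : ℕ+) : ℕ := enc fun v => decide (i ∈ t v)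

theorem maskOf_testBit (t : Fin 6 → Finset ℕ+) (i : ℕ+) (v : Fin 6) :
    (maskOf t i).testBit v = decide (i ∈ t v) := enc_testBit _ v

theorem not_overM (t : Fin 6 → Finset ℕ+) (ht : ∀ v, (t v).card = 3) (es : List ℕ+)
    (hes : es.Nodup) : overM (es.map (maskOf t)) = false := by
  have key : ∀ v : Fin 6,
      ((es.map (maskOf t)).filter (fun m => Nat.testBit m v)).length ≤ 3 := by
    intro v
    rw [List.filter_map, List.length_map]
    have h1 : (es.filter ((fun m => Nat.testBit m v) ∘ maskOf t)).Nodup := hes.filter _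
    rw [← List.toFinset_card_of_nodup h1, ← ht v]
    apply Finset.card_le_card
    intro i hi
    simp [maskOf_testBit] at hi
    exact hi.2
  have k0 := key 0; have k1 := key 1; have k2 := key 2; have k3 := key 3
  have k4 := key 4; have k5 := key 5
  unfold overM
  by_contra hc
  simp only [Bool.not_eq_false, List.any_eq_true] at hc
  obtain ⟨v, hv, hv2⟩ := hc
  have hv2 := Nat.le_of_ble_eq_true hv2
  have hv6 : v < 6 := by
    simp at hv
    omega
  have := key ⟨v, hv6⟩
  simp only at this
  omega

theorem spec_of_specM (t : Fin 6 → Finset ℕ+) (ht : ∀ v, (t v).card = 3) (es : List ℕ+)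
    (h : specM (es.map (maskOf t)) = true) : Spec t Finset.univ := by
  unfold specM at h
  simp only [List.any_eq_true, Bool.and_eq_true, List.mem_range, List.mem_map] at h
  obtain ⟨p, hp, q, hq, ⟨_, ⟨c, -, rfl⟩, hc⟩, r, hr, ⟨_, ⟨a, -, rfl⟩, ha⟩, ⟨_, ⟨b, -, rfl⟩, hb⟩⟩ := h
  have hc := Nat.eq_of_beq_eq_true hc
  have hb := Nat.eq_of_beq_eq_true hb
  have ha := Nat.eq_of_beq_eq_true ha
  have tb : ∀ p < 6, ∀ q < p, ∀ v : Fin 6,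
      (63 ^^^ (2 ^ p + 2 ^ q)).testBit v = decide ((v : ℕ) ≠ p ∧ (v : ℕ) ≠ q) := by
    decide +kernel
  have mc : ∀ v : Fin 6, c ∈ t v ↔ ((v : ℕ) ≠ p ∧ (v : ℕ) ≠ q) := by
    intro v
    have h1 := tb p hp q hq v
    rw [hc, maskOf_testBit] at h1
    exact decide_eq_decide.1 h1
  have ma : ∀ v : Fin 6, a ∈ t v ↔ ((v : ℕ) ≠ q ∧ (v : ℕ) ≠ r) := by
    intro v
    have h1 := tb q (by omega) r hr v
    rw [ha, maskOf_testBit] at h1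
    exact decide_eq_decide.1 h1
  have mb : ∀ v : Fin 6, b ∈ t v ↔ ((v : ℕ) ≠ p ∧ (v : ℕ) ≠ r) := by
    intro v
    have h1 := tb p hp r (by omega) v
    rw [hb, maskOf_testBit] at h1
    exact decide_eq_decide.1 h1
  have hq6 : q < 6 := by omega
  have hr6 : r < 6 := by omega
  have ab : a ≠ b := by
    rintro rfl
    have h1 := ma ⟨q, hq6⟩
    rw [mb] at h1
    simp at h1; omega
  have ac : a ≠ c := by
    rintro rfl
    have h1 := ma ⟨p, hp⟩
    rw [mc] at h1
    simp at h1; omega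
  have bc : b ≠ c := by
    rintro rfl
    have h1 := mb ⟨q, hq6⟩
    rw [mc] at h1
    simp at h1; omega
  refine ⟨a, b, c, ⟨p, hp⟩, ⟨q, hq6⟩, ⟨r, hr6⟩, ab, ac, bc, Finset.mem_univ _,
    Finset.mem_univ _, Finset.mem_univ _, ?_⟩
  simp only [ma, mb, mc]
  refine ⟨by omega, by omega, by omega, by omega, by omega, by omega, by omega, by omega,
    by omega, ?_⟩
  intro v _ h1 h2 h3
  have h1 : (v : ℕ) ≠ p := fun h => h1 (Fin.ext h)
  have h2 : (v : ℕ) ≠ q := fun h => h2 (Fin.ext h)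
  have h3 : (v : ℕ) ≠ r := fun h => h3 (Fin.ext h)
  symm
  apply Finset.eq_of_subset_of_card_le
  · intro x hx
    simp only [Finset.mem_insert, Finset.mem_singleton] at hx
    rcases hx with rfl | rfl | rfl
    · exact (ma v).2 ⟨h2, h3⟩
    · exact (mb v).2 ⟨h1, h3⟩
    · exact (mc v).2 ⟨h1, h2⟩
  · rw [ht v, Finset.card_eq_three.2 ⟨a, b, c, ab, ac, bc, rfl⟩]

theorem good_of_split (t : Fin 6 → Finset ℕ+) (A : ℕ) (hA : A < 64)
    (h : ∀ i, killsM A (maskOf t i) = false) : Good t Finset.univ := by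
  refine ⟨Finset.univ.filter (fun v : Fin 6 => A.testBit v = true), Finset.subset_univ _, ?_, ?_⟩
  · intro i
    have h1 := h i
    unfold killsM at h1
    rw [Bool.or_eq_false_iff] at h1
    obtain ⟨v, hv1, hv2⟩ := exists_of_not_subM hA h1.1
    rw [maskOf_testBit] at hv2
    exact ⟨v, by simpa using hv1, by simpa using hv2⟩
  · intro i
    have h1 := h i
    unfold killsM at h1
    rw [Bool.or_eq_false_iff] at h1
    have hB : 63 ^^^ A < 64 := Nat.xor_lt_two_pow (n := 6) (by norm_num) hA
    obtain ⟨v, hv1, hv2⟩ := exists_of_not_subM hB h1.2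
    rw [maskOf_testBit] at hv2
    rw [Nat.testBit_xor] at hv1
    have h63 : ∀ v : Fin 6, Nat.testBit 63 v = true := by decide
    rw [h63] at hv1
    exact ⟨v, by simpa using hv1, by simpa using hv2⟩

theorem search_sound (t : Fin 6 → Finset ℕ+) (ht : ∀ v, (t v).card = 3) :
    ∀ (sp ms : List ℕ) (es : List ℕ+), (∀ A ∈ sp, A < 64) → es.Nodup →
      (∀ i, maskOf t i ∈ ms) → searchM sp ms (es.map (maskOf t)) = true →
      Good t Finset.univ ∨ Spec t Finset.univ := by
  intro sp
  induction sp with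
  | nil =>
    intro ms es _ hes _ h
    rw [searchM, not_overM t ht es hes, Bool.false_or] at h
    exact Or.inr (spec_of_specM t ht es h)
  | cons A sp ih =>
    intro ms es hsp hes hms h
    have hA : A < 64 := hsp A (by simp)
    have hsp' : ∀ A ∈ sp, A < 64 := fun B hB => hsp B (by simp [hB])
    rw [searchM, not_overM t ht es hes, Bool.false_or] at h
    split_ifs at h with hk
    · exact ih ms es hsp' hes hms h
    · by_cases hg : ∀ i, killsM A (maskOf t i) = false
      · exact Or.inl (good_of_split t A hA hg)
      · push Not at hg
        obtain ⟨i0, hi0⟩ := hg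
        let S : Set ℕ := {m | ∃ i, killsM A (maskOf t i) = true ∧ maskOf t i = m}
        have hne : S.Nonempty := ⟨_, i0, by simpa using hi0, rfl⟩
        have hbd : BddAbove S := ⟨64, by rintro _ ⟨i, -, rfl⟩; exact (enc_lt _).le⟩
        obtain ⟨i, hi, him⟩ := Nat.sSup_mem hne hbd
        have hmax : ∀ j, killsM A (maskOf t j) = true → maskOf t j ≤ maskOf t i := by
          intro j hj
          rw [him]
          exact le_csSup hbd ⟨j, hj, rfl⟩
        rw [List.all_eq_true] at h
        have h2 := h _ (hms i)
        rw [hi, Bool.not_true, Bool.false_or] at h2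
        refine ih _ (i :: es) hsp' ?_ ?_ h2
        · rw [List.nodup_cons]
          refine ⟨fun hmem => hk ?_, hes⟩
          rw [List.any_eq_true]
          exact ⟨_, List.mem_map_of_mem hmem, hi⟩
        · intro j
          rw [List.mem_filter]
          refine ⟨hms j, ?_⟩
          cases hj : killsM A (maskOf t j)
          · rfl
          · rw [Bool.not_true, Bool.false_or]
            exact Nat.ble_eq_true_of_le (hmax j hj)

theorem base_fin (t : Fin 6 → Finset ℕ+) (ht : ∀ v, (t v).card = 3)
    (hf : ∀ i, 2 ≤ (Finset.univ.filter (fun v => i ∉ t v)).card) :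
    Good t Finset.univ ∨ Spec t Finset.univ := by
  refine search_sound t ht splitsM masksM [] (by decide) List.nodup_nil ?_ searchM_true
  intro i
  apply masksM_complete (maskOf t i) (enc_lt _)
  have := hf i
  simpa [maskOf_testBit] using this

theorem base_case (t : ι → Finset ℕ+) (I : Finset ι) (hI : I.card = 6)
    (ht : ∀ v ∈ I, (t v).card = 3)
    (hf : ∀ i, 2 ≤ (I.filter (fun v => i ∉ t v)).card) :
    Good t I ∨ Spec t I := by
  let e : Fin 6 ≃ I := (I.equivFinOfCardEq hI).symm
  have himg : ∀ P : ι → Prop, [DecidablePred P] →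
      (I.filter P) = (Finset.univ.filter (fun v : Fin 6 => P (e v))).image (fun v => (e v : ι)) := by
    intro P _
    ext x
    simp only [Finset.mem_filter, Finset.mem_image, Finset.mem_univ, true_and]
    constructor
    · rintro ⟨hx, hP⟩
      exact ⟨e.symm ⟨x, hx⟩, by simpa using hP, by simp⟩
    · rintro ⟨v, hv, rfl⟩
      exact ⟨(e v).2, hv⟩
  have hb := base_fin (fun v => t (e v)) (fun v => ht _ (e v).2) (by
    intro i
    refine (hf i).trans ?_
    rw [himg (fun v => i ∉ t v)]
    exact Finset.card_image_le)
  rcases hb with ⟨A, -, h1, h2⟩ | ⟨a, b, c, p, q, r, ab, ac, bc, -, -, -, k1, k2, k3, k4, k5, k6, k7, k8, k9, hall⟩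
  · left
    refine ⟨A.image (fun v => (e v : ι)), ?_, ?_, ?_⟩
    · intro x hx
      obtain ⟨v, -, rfl⟩ := Finset.mem_image.1 hx
      exact (e v).2
    · intro i
      obtain ⟨v, hv, hi⟩ := h1 i
      exact ⟨_, Finset.mem_image_of_mem _ hv, hi⟩
    · intro i
      obtain ⟨v, hv, hi⟩ := h2 i
      refine ⟨e v, ?_, hi⟩
      rw [Finset.mem_sdiff] at hv ⊢
      refine ⟨(e v).2, fun hm => hv.2 ?_⟩
      obtain ⟨w, hw, hwe⟩ := Finset.mem_image.1 hm
      rwa [← e.injective (Subtype.ext hwe)]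
  · right
    refine ⟨a, b, c, e p, e q, e r, ab, ac, bc, (e p).2, (e q).2, (e r).2,
      k1, k2, k3, k4, k5, k6, k7, k8, k9, ?_⟩
    intro v hv h1 h2 h3
    have := hall (e.symm ⟨v, hv⟩) (Finset.mem_univ _) (by rintro rfl; simp at h1)
      (by rintro rfl; simp at h2) (by rintro rfl; simp at h3)
    simpa using this

theorem good_mono {t : ι → Finset ℕ+} {I J : Finset ι} (h : I ⊆ J) (hg : Good t I) :
    Good t J := by
  obtain ⟨A, hA, h1, h2⟩ := hg
  refine ⟨A, hA.trans h, h1, fun i => ?_⟩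
  obtain ⟨v, hv, hi⟩ := h2 i
  exact ⟨v, Finset.sdiff_subset_sdiff h (Finset.Subset.refl _) hv, hi⟩

theorem good_of_specAt {t : ι → Finset ℕ+} {I : Finset ι} {v : ι} (hv : v ∉ I)
    (hI : 6 ≤ I.card) {a b c : ℕ+} {p q r : ι} (h : SpecAt t I a b c p q r)
    (hc : c ∉ t v) : Good t (insert v I) := by
  obtain ⟨ab, ac, bc, hp, hq, hr, k1, k2, k3, k4, k5, k6, k7, k8, k9, hall⟩ := h
  have hcard : 2 < (I \ {p, q, r}).card := by
    have h1 := Finset.le_card_sdiff {p, q, r} I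
    have h2 : ({p, q, r} : Finset ι).card ≤ 3 := Finset.card_le_three
    omega
  obtain ⟨w, hw, w', hw', hne⟩ := Finset.one_lt_card.1 (lt_trans (by norm_num) hcard)
  simp only [Finset.mem_sdiff, Finset.mem_insert, Finset.mem_singleton, not_or] at hw hw'
  have tw := hall w hw.1 hw.2.1 hw.2.2.1 hw.2.2.2
  have tw' := hall w' hw'.1 hw'.2.1 hw'.2.2.1 hw'.2.2.2
  have hpr : p ≠ r := by rintro rfl; exact k7 k1
  have hqr : q ≠ r := by rintro rfl; exact k6 k9
  refine ⟨{v, w, r}, ?_, ?_, ?_⟩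
  · intro x hx
    simp only [Finset.mem_insert, Finset.mem_singleton] at hx
    rcases hx with rfl | rfl | rfl
    · simp
    · simp [hw.1]
    · simp [hr]
  · intro i
    by_contra! hcon
    have h1 := hcon v (by simp)
    have h2 := hcon w (by simp)
    have h3 := hcon r (by simp)
    rw [tw] at h2
    simp only [Finset.mem_insert, Finset.mem_singleton] at h2
    rcases h2 with rfl | rfl | rfl
    · exact k7 h3
    · exact k8 h3
    · exact hc h1
  · intro i
    have mem : ∀ x ∈ I, x ≠ w → x ≠ r → x ∈ insert v I \ {v, w, r} := by
      intro x hx h1 h2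
      have h3 : x ≠ v := by rintro rfl; exact hv hx
      simp [hx, h1, h2, h3]
    by_contra! hcon
    have h1 := hcon p (mem p hp (Ne.symm hw.2.1) hpr)
    have h2 := hcon q (mem q hq (Ne.symm hw.2.2.1) hqr)
    have h3 := hcon w' (mem w' hw'.1 hne.symm hw'.2.2.2)
    rw [tw'] at h3
    simp only [Finset.mem_insert, Finset.mem_singleton] at h3
    rcases h3 with rfl | rfl | rfl
    · exact k4 h2
    · exact k2 h1
    · exact k3 h1

theorem good_or_spec_insert {t : ι → Finset ℕ+} {I : Finset ι} {v : ι} (hv : v ∉ I)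
    (hI : 6 ≤ I.card) (htv : (t v).card = 3) (h : Spec t I) :
    Good t (insert v I) ∨ Spec t (insert v I) := by
  obtain ⟨a, b, c, p, q, r, h⟩ := h
  have h' := h
  obtain ⟨ab, ac, bc, hp, hq, hr, k1, k2, k3, k4, k5, k6, k7, k8, k9, hall⟩ := h'
  by_cases hc : c ∈ t v
  swap
  · exact Or.inl (good_of_specAt hv hI h hc)
  by_cases hb : b ∈ t v
  swap
  · refine Or.inl (good_of_specAt (a := a) (b := c) (c := b) (p := p) (q := r) (r := q)
      hv hI ⟨ac, ab, bc.symm, hp, hr, hq, k1, k3, k2, k7, k9, k8, k4, k6, k5, ?_⟩ hb)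
    intro x hx h1 h2 h3
    rw [hall x hx h1 h3 h2]
    ext y; simp; tauto
  by_cases ha : a ∈ t v
  swap
  · refine Or.inl (good_of_specAt (a := c) (b := b) (c := a) (p := r) (q := q) (r := p)
      hv hI ⟨bc.symm, ac.symm, ab.symm, hr, hq, hp, k9, k8, k7, k6, k5, k4, k3, k2, k1, ?_⟩ ha)
    intro x hx h1 h2 h3
    rw [hall x hx h3 h2 h1]
    ext y; simp; tauto
  right
  refine ⟨a, b, c, p, q, r, ab, ac, bc, Finset.mem_insert_of_mem hp, Finset.mem_insert_of_mem hq,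
    Finset.mem_insert_of_mem hr, k1, k2, k3, k4, k5, k6, k7, k8, k9, ?_⟩
  intro x hx h1 h2 h3
  rcases Finset.mem_insert.1 hx with rfl | hx
  · symm
    apply Finset.eq_of_subset_of_card_le
    · intro y hy
      simp only [Finset.mem_insert, Finset.mem_singleton] at hy
      rcases hy with rfl | rfl | rfl <;> assumption
    · rw [htv, Finset.card_eq_three.2 ⟨a, b, c, ab, ac, bc, rfl⟩]
  · exact hall x hx h1 h2 h3

/-- Four elements that are each absent from exactly two triples. -/
theorem good_of_four {t : ι → Finset ℕ+} {I : Finset ι} (hI : 7 ≤ I.card)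
    (ht : ∀ v ∈ I, (t v).card = 3) (S : Finset ℕ+) (hS : S.card = 4)
    (hcrit : ∀ s ∈ S, (I.filter (fun v => s ∉ t v)).card = 2) : Good t I := by
  have hsum : ∑ v ∈ I, (S \ t v).card = 8 := by
    have h1 : ∀ v ∈ I, (S \ t v).card = ∑ s ∈ S, if s ∉ t v then 1 else 0 := by
      intro v _
      rw [← Finset.card_filter, Finset.sdiff_eq_filter]
    rw [Finset.sum_congr rfl h1, Finset.sum_comm]
    have h2 : ∀ s ∈ S, (∑ v ∈ I, if s ∉ t v then 1 else 0) = 2 := by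
      intro s hs
      rw [← Finset.card_filter, hcrit s hs]
    rw [Finset.sum_congr rfl h2, Finset.sum_const, hS, smul_eq_mul]
  have hone : ∀ v ∈ I, 1 ≤ (S \ t v).card := by
    intro v hv
    have := Finset.le_card_sdiff (t v) S
    rw [ht v hv, hS] at this
    omega
  have htwo : ∀ v ∈ I, ¬ (t v ⊆ S) → 2 ≤ (S \ t v).card := by
    intro v hv hns
    have h1 := Finset.card_sdiff_add_card_inter S (t v)
    have h2 : (S ∩ t v).card < (t v).card := by
      apply Finset.card_lt_card
      refine ⟨Finset.inter_subset_right, fun h => hns ?_⟩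
      exact fun x hx => (Finset.mem_inter.1 (h hx)).1
    rw [ht v hv] at h2
    omega
  set K := I.filter (fun v => t v ⊆ S) with hK
  set N := I.filter (fun v => ¬ t v ⊆ S) with hN
  have hKN : K.card + N.card = I.card := Finset.card_filter_add_card_filter_not _
  have hcount : K.card + 2 * N.card ≤ 8 := by
    rw [← hsum, ← Finset.sum_filter_add_sum_filter_not I (fun v => t v ⊆ S)]
    apply Nat.add_le_add
    · rw [← hK, Finset.card_eq_sum_ones]
      exact Finset.sum_le_sum fun v hv => hone v (Finset.mem_filter.1 hv).1
    · rw [← hN, mul_comm, ← smul_eq_mul, ← Finset.sum_const]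
      exact Finset.sum_le_sum fun v hv =>
        htwo v (Finset.mem_filter.1 hv).1 (Finset.mem_filter.1 hv).2
  have hex : ∀ s ∈ S, ∃ v ∈ K, s ∉ t v := by
    intro s hs
    by_contra! hcon
    have h1 : I.filter (fun v => s ∉ t v) ⊆ N := by
      intro v hv
      rw [Finset.mem_filter] at hv
      rw [hN, Finset.mem_filter]
      exact ⟨hv.1, fun h => hv.2 (hcon v (Finset.mem_filter.2 ⟨hv.1, h⟩))⟩
    have := Finset.card_le_card h1
    rw [hcrit s hs] at this
    omega
  have hex' : ∀ s, ∃ v, s ∈ S → v ∈ K ∧ s ∉ t v := by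
    intro s
    by_cases hs : s ∈ S
    · obtain ⟨v, hv⟩ := hex s hs
      exact ⟨v, fun _ => hv⟩
    · obtain ⟨v, hv⟩ : I.Nonempty := Finset.card_pos.1 (by omega)
      exact ⟨v, fun h => absurd h hs⟩
  choose g hg using hex'
  have hgc : ∀ s ∈ S, ∀ s' ∈ S, s ≠ s' → s' ∈ t (g s) := by
    intro s hs s' hs' hne
    by_contra hcon
    obtain ⟨h1, h2⟩ := hg s hs
    rw [hK, Finset.mem_filter] at h1
    have h3 : t (g s) ⊆ (S.erase s).erase s' := by
      intro x hx
      rw [Finset.mem_erase, Finset.mem_erase]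
      exact ⟨by rintro rfl; exact hcon hx, by rintro rfl; exact h2 hx, h1.2 hx⟩
    have h4 := Finset.card_le_card h3
    rw [Finset.card_erase_of_mem (Finset.mem_erase.2 ⟨hne.symm, hs'⟩),
      Finset.card_erase_of_mem hs, ht _ h1.1, hS] at h4
    omega
  have hSne : S.Nonempty := Finset.card_pos.1 (by omega)
  refine ⟨S.image g, ?_, ?_, ?_⟩
  · intro x hx
    obtain ⟨s, hs, rfl⟩ := Finset.mem_image.1 hx
    exact (Finset.mem_filter.1 (hg s hs).1).1
  · intro i
    by_cases hi : i ∈ S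
    · exact ⟨g i, Finset.mem_image_of_mem _ hi, (hg i hi).2⟩
    · obtain ⟨s, hs⟩ := hSne
      exact ⟨g s, Finset.mem_image_of_mem _ hs,
        fun h => hi ((Finset.mem_filter.1 (hg s hs).1).2 h)⟩
  · intro i
    by_cases hi : i ∈ S
    · have h2 := hcrit i hi
      obtain ⟨w, hw, hne⟩ := Finset.exists_mem_ne (by rw [h2]; norm_num) (g i)
      rw [Finset.mem_filter] at hw
      refine ⟨w, Finset.mem_sdiff.2 ⟨hw.1, fun hm => ?_⟩, hw.2⟩
      obtain ⟨s, hs, rfl⟩ := Finset.mem_image.1 hm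
      by_cases hsi : s = i
      · exact hne (by rw [hsi])
      · exact hw.2 (hgc s hs i hi hsi)
    · have h1 : (S.image g).card < K.card := by
        have := Finset.card_image_le (s := S) (f := g)
        omega
      obtain ⟨w, hw, hw'⟩ := Finset.exists_mem_notMem_of_card_lt_card h1
      rw [hK, Finset.mem_filter] at hw
      exact ⟨w, Finset.mem_sdiff.2 ⟨hw.1, hw'⟩, fun h => hi (hw.2 h)⟩

theorem main_indexed (t : ι → Finset ℕ+) : ∀ (n : ℕ) (I : Finset ι), I.card = n + 6 →
    (∀ v ∈ I, (t v).card = 3) →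
    (∀ i, 2 ≤ (I.filter (fun v => i ∉ t v)).card) → Good t I ∨ Spec t I := by
  intro n
  induction n with
  | zero => exact fun I hI ht hf => base_case t I (by omega) ht hf
  | succ n ih =>
    intro I hI ht hf
    by_cases hex : ∃ v ∈ I, ∀ i, (I.filter (fun v => i ∉ t v)).card = 2 → i ∈ t v
    · obtain ⟨v, hv, hcr⟩ := hex
      have hcard : (I.erase v).card = n + 6 := by
        rw [Finset.card_erase_of_mem hv]; omega
      have h := ih (I.erase v) hcard (fun w hw => ht w (Finset.mem_of_mem_erase hw)) (by
        intro i
        rw [Finset.filter_erase]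
        by_cases hi : i ∈ t v
        · rw [Finset.erase_eq_of_notMem (by simp [hi])]
          exact hf i
        · have h1 : (I.filter (fun v => i ∉ t v)).card ≠ 2 := fun h => hi (hcr i h)
          have h2 := hf i
          have h3 := Finset.pred_card_le_card_erase (s := I.filter (fun v => i ∉ t v)) (a := v)
          omega)
      rcases h with h | h
      · exact Or.inl (good_mono (Finset.erase_subset _ _) h)
      · have := good_or_spec_insert (Finset.notMem_erase v I) (by omega) (ht v hv) h
        rwa [Finset.insert_erase hv] at this
    · left
      push Not at hex
      let U : Finset ℕ+ :=
        (I.biUnion t).filter (fun i => (I.filter (fun v => i ∉ t v)).card = 2)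
      have hU : ∀ i, (I.filter (fun v => i ∉ t v)).card = 2 → i ∈ U := by
        intro i hi
        refine Finset.mem_filter.2 ⟨?_, hi⟩
        by_contra hcon
        have h1 : I.filter (fun v => i ∉ t v) = I := by
          apply Finset.filter_true_of_mem
          intro v hv hiv
          exact hcon (Finset.mem_biUnion.2 ⟨v, hv, hiv⟩)
        rw [h1] at hi
        omega
      have hcov : I ⊆ U.biUnion (fun i => I.filter (fun v => i ∉ t v)) := by
        intro v hv
        obtain ⟨i, hi, hiv⟩ := hex v hv
        exact Finset.mem_biUnion.2 ⟨i, hU i hi, Finset.mem_filter.2 ⟨hv, hiv⟩⟩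
      have h1 := (Finset.card_le_card hcov).trans
        (Finset.card_biUnion_le_card_mul U _ 2 (fun i hi => (Finset.mem_filter.1 hi).2.le))
      obtain ⟨S, hSU, hS⟩ := Finset.exists_subset_card_eq (show 4 ≤ U.card by omega)
      exact good_of_four (by omega) ht S hS (fun s hs => (Finset.mem_filter.1 (hSU hs)).2)

end NiceTriples

/-! ### Part 3: multisets -/

open NiceTriples in
theorem nice_of_fair_nonspecial
    (T : Multiset (Finset ℕ+)) (hT : ∀ t ∈ T, t.card = 3)
    (hn : 6 ≤ Multiset.card T) (hF : CFair 2 T) (hS : ¬ Special T) :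
    ∃ f : Fin 2 → Multiset (Finset ℕ+), NiceColoring 2 T f := by
  obtain ⟨n, t, rfl⟩ : ∃ (n : ℕ) (t : Fin n → Finset ℕ+), T = Finset.univ.val.map t := by
    induction T using Quot.inductionOn with
    | h L => exact ⟨L.length, L.get, by simp⟩
  have hn' : 6 ≤ n := by simpa using hn
  have ht : ∀ v, (t v).card = 3 := fun v => hT _ (by simp)
  have hf : ∀ i, 2 ≤ (Finset.univ.filter (fun v => i ∉ t v)).card := by
    intro i
    by_cases hi : ∃ v, i ∈ t v
    · have h := hF i (by obtain ⟨v, hv⟩ := hi; exact ⟨t v, by simp, hv⟩)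
      rw [Multiset.filter_map, Multiset.card_map] at h
      exact h
    · push Not at hi
      rw [Finset.filter_true_of_mem (fun v _ => hi v), Finset.card_univ, Fintype.card_fin]
      omega
  rcases main_indexed t (n - 6) Finset.univ (by simp; omega) (fun v _ => ht v) hf with
    ⟨A, hA, h1, h2⟩ | ⟨a, b, c, p, q, r, ab, ac, bc, -, -, -, k1, k2, k3, k4, k5, k6, k7, k8, k9, hall⟩
  · refine ⟨![A.val.map t, (Finset.univ \ A).val.map t], ?_, ?_⟩
    · rw [Fin.sum_univ_two]
      simp only [Matrix.cons_val_zero, Matrix.cons_val_one]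
      rw [← Multiset.map_add, Finset.sdiff_val, add_comm,
        Multiset.sub_add_cancel (Finset.val_le_iff.2 hA)]
    · intro j i _
      fin_cases j
      · obtain ⟨v, hv, hi⟩ := h1 i
        exact ⟨t v, Multiset.mem_map_of_mem t hv, hi⟩
      · obtain ⟨v, hv, hi⟩ := h2 i
        exact ⟨t v, Multiset.mem_map_of_mem t hv, hi⟩
  · exfalso
    apply hS
    have hpq : p ≠ q := by rintro rfl; exact k4 k1
    have hpr : p ≠ r := by rintro rfl; exact k7 k1
    have hqr : q ≠ r := by rintro rfl; exact k6 k9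
    refine ⟨a, b, c, ab, ac, bc, t p, t q, t r, ?_, k1, k2, k3, k4, k5, k6, k7, k8, k9⟩
    have hsplit : (Finset.univ : Finset (Fin n)).val
        = (Finset.univ \ {p, q, r} : Finset (Fin n)).val + ({p, q, r} : Finset (Fin n)).val := by
      rw [Finset.sdiff_val,
        Multiset.sub_add_cancel (Finset.val_le_iff.2 (Finset.subset_univ _))]
    have hc3 : ({p, q, r} : Finset (Fin n)).card = 3 :=
      Finset.card_eq_three.2 ⟨p, q, r, hpq, hpr, hqr, rfl⟩
    have hval : ({p, q, r} : Finset (Fin n)).val = p ::ₘ q ::ₘ {r} := by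
      rw [Finset.insert_val_of_notMem (by simp [hpq, hpr]),
        Finset.insert_val_of_notMem (by simp [hqr]), Finset.singleton_val]
    have hrep : (Finset.univ \ {p, q, r} : Finset (Fin n)).val.map t
        = Multiset.replicate (n - 3) {a, b, c} := by
      rw [Multiset.eq_replicate]
      constructor
      · rw [Multiset.card_map, Finset.card_val,
          Finset.card_sdiff_of_subset (Finset.subset_univ _), hc3]
        simp
      · intro x hx
        obtain ⟨v, hv, rfl⟩ := Multiset.mem_map.1 hx
        have hv : v ∈ (Finset.univ \ {p, q, r} : Finset (Fin n)) := hv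
        simp only [Finset.mem_sdiff, Finset.mem_insert, Finset.mem_singleton, not_or] at hv
        exact hall v (Finset.mem_univ _) hv.2.1 hv.2.2.1 hv.2.2.2
    have hcard : Multiset.card (Finset.univ.val.map t) = n := by simp
    rw [hcard]
    conv_lhs => rw [hsplit, Multiset.map_add, hrep, hval]
    simp

theorem fair_nonspecial_of_nice
    (T : Multiset (Finset ℕ+)) (hn : 6 ≤ Multiset.card T)
    (h : ∃ f : Fin 2 → Multiset (Finset ℕ+), NiceColoring 2 T f) :
    CFair 2 T ∧ ¬ Special T := by
  obtain ⟨f, hsum, hnice⟩ := h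
  rw [Fin.sum_univ_two] at hsum
  refine ⟨?_, ?_⟩
  · intro i hi
    have key : ∀ j, 1 ≤ Multiset.card ((f j).filter (fun t => i ∉ t)) := by
      intro j
      obtain ⟨u, hu, hiu⟩ := hnice j i hi
      exact Multiset.card_pos_iff_exists_mem.2 ⟨u, Multiset.mem_filter.2 ⟨hu, hiu⟩⟩
    have h0 := key 0
    have h1 := key 1
    rw [← hsum, Multiset.filter_add, Multiset.card_add]
    omega
  · rintro ⟨a, b, c, ab, ac, bc, t₁, t₂, t₃, hT, k1, k2, k3, k4, k5, k6, k7, k8, k9⟩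
    have h12 : t₁ ≠ t₂ := by rintro rfl; exact k4 k1
    have h13 : t₁ ≠ t₃ := by rintro rfl; exact k7 k1
    have h23 : t₂ ≠ t₃ := by rintro rfl; exact k6 k9
    have h1 : t₁ ≠ {a, b, c} := by rintro rfl; simp at k2
    have h2 : t₂ ≠ {a, b, c} := by rintro rfl; simp at k4
    have h3 : t₃ ≠ {a, b, c} := by rintro rfl; simp at k7
    have hmemT : ∀ u, u ∈ T → u = {a, b, c} ∨ u = t₁ ∨ u = t₂ ∨ u = t₃ := by
      intro u hu
      rw [hT, Multiset.mem_add] at hu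
      rcases hu with hu | hu
      · exact Or.inl (Multiset.eq_of_mem_replicate hu)
      · right; simpa using hu
    have c1 : T.count t₁ = 1 := by
      rw [hT, Multiset.count_add, Multiset.count_replicate]
      simp [h12, h13, h1, h1.symm, Multiset.insert_eq_cons, Multiset.count_cons,
        Multiset.count_singleton]
    have c2 : T.count t₂ = 1 := by
      rw [hT, Multiset.count_add, Multiset.count_replicate]
      simp [h12.symm, h23, h2, h2.symm, Multiset.insert_eq_cons, Multiset.count_cons,
        Multiset.count_singleton]
    have c3 : T.count t₃ = 1 := by
      rw [hT, Multiset.count_add, Multiset.count_replicate]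
      simp [h13.symm, h23.symm, h3, h3.symm, Multiset.insert_eq_cons, Multiset.count_cons,
        Multiset.count_singleton]
    have m1 : t₁ ∈ T := Multiset.count_pos.1 (by omega)
    have m2 : t₂ ∈ T := Multiset.count_pos.1 (by omega)
    have m3 : t₃ ∈ T := Multiset.count_pos.1 (by omega)
    rw [← hsum, Multiset.count_add] at c1 c2 c3
    have hle : ∀ j, ∀ u ∈ f j, u ∈ T := by
      intro j u hu
      rw [← hsum, Multiset.mem_add]
      fin_cases j
      · exact Or.inl hu
      · exact Or.inr hu
    have ea : ∀ j, 1 ≤ (f j).count t₂ + (f j).count t₃ := by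
      intro j
      obtain ⟨u, hu, hau⟩ := hnice j a ⟨t₁, m1, k1⟩
      have hp := Multiset.count_pos.2 hu
      rcases hmemT u (hle j u hu) with rfl | rfl | rfl | rfl
      · simp at hau
      · exact absurd k1 hau
      · omega
      · omega
    have eb : ∀ j, 1 ≤ (f j).count t₁ + (f j).count t₃ := by
      intro j
      obtain ⟨u, hu, hau⟩ := hnice j b ⟨t₂, m2, k5⟩
      have hp := Multiset.count_pos.2 hu
      rcases hmemT u (hle j u hu) with rfl | rfl | rfl | rfl
      · simp at hau
      · omega
      · exact absurd k5 hau
      · omega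
    have ec : ∀ j, 1 ≤ (f j).count t₁ + (f j).count t₂ := by
      intro j
      obtain ⟨u, hu, hau⟩ := hnice j c ⟨t₃, m3, k9⟩
      have hp := Multiset.count_pos.2 hu
      rcases hmemT u (hle j u hu) with rfl | rfl | rfl | rfl
      · simp at hau
      · omega
      · omega
      · exact absurd k9 hau
    have := ea 0; have := ea 1; have := eb 0; have := eb 1; have := ec 0; have := ec 1
    omega

/-- A finite multiset of `n ≥ 6` triples admits a nice two-coloring if and only if it
is fair (2-fair) and non-special. -/
theorem nice_two_coloring_iff_fair_nonspecial
    (T : Multiset (Finset ℕ+)) (hT : ∀ t ∈ T, t.card = 3)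
    (hn : 6 ≤ Multiset.card T) :
    (∃ f : Fin 2 → Multiset (Finset ℕ+), NiceColoring 2 T f) ↔
      (CFair 2 T ∧ ¬ Special T) :=
  ⟨fair_nonspecial_of_nice T hn, fun h => nice_of_fair_nonspecial T hT hn h.1 h.2⟩
end

section
/- A finite multiset of n ≥ 6 triples admits a nice partial 2-coloring that colors at most 4 triples with each of the two colors if and only if the multiset is fair and non-special. -/
/-- `f` is a *nice partial `c`-coloring* of the multiset `T` of tuples: the color
classes `f j` form disjoint submultisets of `T` (some tuples may stay uncolored), and
for each color `j` and every element `i` appearing in some tuple of `T` there is a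
tuple of color `j` not containing `i`. -/
def NicePartialColoring (c : ℕ) (T : Multiset (Finset ℕ+))
    (f : Fin c → Multiset (Finset ℕ+)) : Prop :=
  (∑ j, f j) ≤ T ∧
  ∀ j : Fin c, ∀ i : ℕ+, (∃ t ∈ T, i ∈ t) → ∃ t ∈ f j, i ∉ t

theorem npc_four {s : Finset ℕ+} (h : s.card = 3) {a b c d : ℕ+} (ha : a ∈ s) (hb : b ∈ s)
    (hc : c ∈ s) (hd : d ∈ s) (hab : a ≠ b) (hac : a ≠ c) (hbc : b ≠ c) :
    d = a ∨ d = b ∨ d = c := by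
  by_contra hcon
  have : ({a, b, c, d} : Finset ℕ+) ⊆ s := by
    intro x hx; simp at hx; grind
  have h2 := Finset.card_le_card this
  have h3 : ({a, b, c, d} : Finset ℕ+).card = 4 := by
    rw [Finset.card_eq_succ]
    refine ⟨a, {b, c, d}, by grind, rfl, ?_⟩
    rw [Finset.card_eq_three]
    exact ⟨b, c, d, by grind, by grind, by grind, rfl⟩
  omega

theorem npc_xyz {s : Finset ℕ+} (h : s.card = 3) : ∃ x y z, x ≠ y ∧ x ≠ z ∧ y ≠ z ∧
    x ∈ s ∧ y ∈ s ∧ z ∈ s ∧ ∀ w ∈ s, w = x ∨ w = y ∨ w = z := by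
  obtain ⟨x, y, z, h1, h2, h3, rfl⟩ := Finset.card_eq_three.1 h
  exact ⟨x, y, z, h1, h2, h3, by simp, by simp, by simp, by simp⟩

theorem npc_yz {s : Finset ℕ+} (h : s.card = 3) {x : ℕ+} (hx : x ∈ s) : ∃ y z, x ≠ y ∧ x ≠ z ∧ y ≠ z ∧
    y ∈ s ∧ z ∈ s ∧ ∀ w ∈ s, w = x ∨ w = y ∨ w = z := by
  obtain ⟨u, v, w, h1, h2, h3, h4, h5, h6, h7⟩ := npc_xyz h
  rcases h7 x hx with rfl | rfl | rfl
  · exact ⟨v, w, by grind⟩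
  · exact ⟨u, w, by grind⟩
  · exact ⟨u, v, by grind⟩

theorem npc_z {s : Finset ℕ+} (h : s.card = 3) {x y : ℕ+} (hx : x ∈ s) (hy : y ∈ s) (hxy : x ≠ y) :
    ∃ z, x ≠ z ∧ y ≠ z ∧ z ∈ s ∧ ∀ w ∈ s, w = x ∨ w = y ∨ w = z := by
  obtain ⟨u, v, h1, h2, h3, h4, h5, h6⟩ := npc_yz h hx
  rcases h6 y hy with rfl | rfl | rfl
  · exact absurd rfl hxy
  · exact ⟨v, by grind⟩
  · exact ⟨u, by grind⟩

/-- a split witnessing niceness -/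
def NpcGood {ι : Type} (t : ι → Finset ℕ+) : Prop :=
  ∃ S : ι → Prop, ∀ x, (∃ j, S j ∧ x ∉ t j) ∧ (∃ j, ¬ S j ∧ x ∉ t j)

theorem npc_bad {ι : Type} {t : ι → Finset ℕ+} (h : ¬ NpcGood t) (S : ι → Prop) :
    ∃ x, (∀ j, S j → x ∈ t j) ∨ (∀ j, ¬ S j → x ∈ t j) := by
  by_contra hcon
  push Not at hcon
  exact h ⟨S, hcon⟩

theorem npc_k3 {ι : Type} (t : ι → Finset ℕ+) (ht : ∀ j, (t j).card = 3)
    (h0 : Nonempty ι)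
    (hf : ∀ x k l, ∃ j, j ≠ k ∧ j ≠ l ∧ x ∉ t j) : NpcGood t := by
  by_contra hbad
  replace hbad := npc_bad hbad
  -- intersecting
  have hint : ∀ p q, ∃ x, x ∈ t p ∧ x ∈ t q := by
    intro p q
    by_contra hcon
    obtain ⟨x, hx⟩ := hbad (fun j => j = p ∨ j = q)
    obtain ⟨j, hj⟩ := hf x p q
    grind
  by_cases h3 : ∃ p q r, ∀ x, x ∈ t p → x ∈ t q → x ∉ t r
  · have key : ∀ p q r x3, (∀ x, x ∈ t p → x ∈ t q → x ∉ t r) →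
        (∀ x, x ∈ t p → x ∈ t q → x = x3) → x3 ∈ t p → x3 ∈ t q → False := by
      intro p q r x3 hpqr hx3 hp hq
      obtain ⟨i, hi⟩ := hbad (fun j => j = p ∨ j = q ∨ j = r)
      have hi' : ∀ j, j ≠ p → j ≠ q → j ≠ r → i ∈ t j := by grind
      obtain ⟨b, hb1, -, hb⟩ := hf x3 r r
      obtain ⟨b', hb'1, hb'2, hb'⟩ := hf x3 r b
      have aux : ∀ b, x3 ∉ t b → ∃ j, ∀ l, l ≠ p → l ≠ q → l ≠ b → j ∈ t l := by
        intro b hb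
        obtain ⟨j, hj⟩ := hbad (fun j => j = p ∨ j = q ∨ j = b)
        exact ⟨j, by grind⟩
      obtain ⟨j, hj⟩ := aux b hb
      obtain ⟨j', hj'⟩ := aux b' hb'
      have e1 : j ∉ t p ∧ j ∉ t q ∧ j ∉ t b := by
        refine ⟨?_, ?_, ?_⟩
        · obtain ⟨l, _⟩ := hf j q b; grind
        · obtain ⟨l, _⟩ := hf j p b; grind
        · obtain ⟨l, _⟩ := hf j p q; grind
      have e2 : j' ∉ t p ∧ j' ∉ t q ∧ j' ∉ t b' := by
        refine ⟨?_, ?_, ?_⟩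
        · obtain ⟨l, _⟩ := hf j' q b'; grind
        · obtain ⟨l, _⟩ := hf j' p b'; grind
        · obtain ⟨l, _⟩ := hf j' p q; grind
      have e3 : j ∈ t b' := hj b' (by grind) (by grind) hb'2
      have hrp : r ≠ p := by grind
      have hrq : r ≠ q := by grind
      have f1 := hj r hrp hrq (Ne.symm hb1)
      have f2 := hj' r hrp hrq (Ne.symm hb'1)
      obtain ⟨x1, hx1⟩ := hint p r
      obtain ⟨x2, hx2⟩ := hint q r
      have := npc_four (ht r) f1 f2 hx1.2 hx2.2 (by grind) (by grind) (by grind)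
      grind
    obtain ⟨p, q, r, hpqr⟩ := h3
    by_cases hs : ∃ x3, (∀ x, x ∈ t p → x ∈ t q → x = x3) ∧ x3 ∈ t p ∧ x3 ∈ t q
    · obtain ⟨x3, h⟩ := hs
      exact key p q r x3 hpqr h.1 h.2.1 h.2.2
    · obtain ⟨x, hx⟩ := hint p q
      obtain ⟨y, hy⟩ : ∃ y, y ∈ t p ∧ y ∈ t q ∧ y ≠ x := by grind
      obtain ⟨z, hz⟩ := hint p r
      refine key p r q z (by grind) ?_ hz.1 hz.2
      intro w hw1 hw2
      have := npc_four (ht p) hx.1 hy.1 hz.1 hw1 (by grind) (by grind) (by grind)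
      grind
  · push Not at h3
    obtain ⟨o⟩ := h0
    obtain ⟨x, y, z, hxy, hxz, hyz, hx, hy, hz, ho⟩ := npc_xyz (ht o)
    have gx : ∀ j, x ∉ t j → y ∈ t j ∧ z ∈ t j := by
      intro j hj
      obtain ⟨k, _, _, hk⟩ := hf y o o
      obtain ⟨l, _, _, hl⟩ := hf z o o
      have a1 := h3 o j k
      have a2 := h3 o j l
      grind
    have gy : ∀ j, y ∉ t j → x ∈ t j ∧ z ∈ t j := by
      intro j hj
      obtain ⟨k, _, _, hk⟩ := hf x o o
      obtain ⟨l, _, _, hl⟩ := hf z o o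
      have a1 := h3 o j k
      have a2 := h3 o j l
      grind
    have gz : ∀ j, z ∉ t j → x ∈ t j ∧ y ∈ t j := by
      intro j hj
      obtain ⟨k, _, _, hk⟩ := hf x o o
      obtain ⟨l, _, _, hl⟩ := hf y o o
      have a1 := h3 o j k
      have a2 := h3 o j l
      grind
    obtain ⟨b, _, _, hb⟩ := hf x o o
    obtain ⟨c, _, _, hc⟩ := hf y o o
    obtain ⟨d, _, _, hd⟩ := hf z o o
    obtain ⟨b', _, nb, hb'⟩ := hf x o b
    obtain ⟨c', _, nc, hc'⟩ := hf y o c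
    obtain ⟨d', _, nd, hd'⟩ := hf z o d
    obtain ⟨w, hw⟩ := hbad (fun j => j = o ∨ j = b ∨ j = c ∨ j = d)
    have hw' : ∀ j, j ≠ o → j ≠ b → j ≠ c → j ≠ d → w ∈ t j := by grind
    have wb' := hw' b' (by grind) (by grind) (by grind) (by grind)
    have wc' := hw' c' (by grind) (by grind) (by grind) (by grind)
    have wd' := hw' d' (by grind) (by grind) (by grind) (by grind)
    have wo : w ∉ t o := by grind
    have ab : ∀ v ∈ t b', v = y ∨ v = z ∨ v = w := fun v hv =>
      npc_four (ht b') (gx b' hb').1 (gx b' hb').2 wb' hv hyz (by grind) (by grind)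
    have ac : ∀ v ∈ t c', v = x ∨ v = z ∨ v = w := fun v hv =>
      npc_four (ht c') (gy c' hc').1 (gy c' hc').2 wc' hv hxz (by grind) (by grind)
    have ad : ∀ v ∈ t d', v = x ∨ v = y ∨ v = w := fun v hv =>
      npc_four (ht d') (gz d' hd').1 (gz d' hd').2 wd' hv hxy (by grind) (by grind)
    have wb : w ∈ t b := by have := h3 b c' d'; grind
    have wc : w ∈ t c := by have := h3 c b' d'; grind
    have wd : w ∈ t d := by have := h3 d b' c'; grind
    obtain ⟨o', no, _, ho'⟩ := hf w o o
    exact ho' (hw' o' no (fun h => ho' (h ▸ wb)) (fun h => ho' (h ▸ wc)) (fun h => ho' (h ▸ wd)))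

theorem npc_triG {κ : Type} {e : κ → Finset ℕ+} {P Q : Finset ℕ+} {a : ℕ+}
    (haP : a ∉ P) (haQ : a ∉ Q)
    (hb : ∀ S : κ → Prop, (∃ x ∈ P, ∀ j, S j → x ∈ e j) ∨ (∃ x ∈ Q, ∀ j, ¬ S j → x ∈ e j))
    {x y z : ℕ+}
    (hmem : ∀ j, ∀ w ∈ e j, w = a ∨ w = x ∨ w = y ∨ w = z)
    {m m' k l : κ} (hmm : m ≠ m') (hm : z ∉ e m) (hm' : z ∉ e m') (hk : x ∉ e k) (hl : y ∉ e l)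
    (hkl : k ≠ l) (hmk : m ≠ k) (hml : m ≠ l) (hmk' : m' ≠ k) (hml' : m' ≠ l) :
    (x ∈ P ∧ x ∈ Q) ∨ (y ∈ P ∧ y ∈ Q) := by
  have T1 : x ∈ P ∨ y ∈ Q := by
    rcases hb (fun j => j = m ∨ j = l) with ⟨w, hw, h⟩ | ⟨w, hw, h⟩
    · have h1 := h m (by simp)
      have h2 := h l (by simp)
      have := hmem m w h1
      grind
    · have h1 := h m' (by grind)
      have h2 := h k (by grind)
      have := hmem m' w h1
      grind
  have T2 : y ∈ P ∨ x ∈ Q := by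
    rcases hb (fun j => j = m ∨ j = k) with ⟨w, hw, h⟩ | ⟨w, hw, h⟩
    · have h1 := h m (by simp)
      have h2 := h k (by simp)
      have := hmem m w h1
      grind
    · have h1 := h m' (by grind)
      have h2 := h l (by grind)
      have := hmem m' w h1
      grind
  have T3 : x ∈ P ∨ y ∈ P := by
    rcases hb (fun j => j = m) with ⟨w, hw, h⟩ | ⟨w, hw, h⟩
    · have h1 := h m (by simp)
      have := hmem m w h1
      grind
    · have h1 := h m' (by grind)
      have h2 := h l (by grind)
      have h3 := h k (by grind)
      have := hmem m' w h1
      grind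
  have T4 : x ∈ Q ∨ y ∈ Q := by
    rcases hb (fun j => j ≠ m) with ⟨w, hw, h⟩ | ⟨w, hw, h⟩
    · have h1 := h m' (by grind)
      have h2 := h l (by grind)
      have h3 := h k (by grind)
      have := hmem m' w h1
      grind
    · have h1 := h m (by simp)
      have := hmem m w h1
      grind
  tauto

/-- every edge consists of `a` and exactly two of `x, y, z` -/
structure NpcTri {κ : Type} (e : κ → Finset ℕ+) (a x y z : ℕ+) : Prop where
  hx : ∀ j, x ∉ e j → y ∈ e j ∧ z ∈ e j
  hy : ∀ j, y ∉ e j → x ∈ e j ∧ z ∈ e j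
  hz : ∀ j, z ∉ e j → x ∈ e j ∧ y ∈ e j
  hall : ∀ j, ¬ (x ∈ e j ∧ y ∈ e j ∧ z ∈ e j)
  hmem : ∀ j, ∀ w ∈ e j, w = a ∨ w = x ∨ w = y ∨ w = z

theorem NpcTri.swap {κ : Type} {e : κ → Finset ℕ+} {a x y z : ℕ+} (h : NpcTri e a x y z) :
    NpcTri e a y x z where
  hx := h.hy
  hy := h.hx
  hz := fun j hj => (h.hz j hj).symm
  hall := fun j hj => h.hall j ⟨hj.2.1, hj.1, hj.2.2⟩
  hmem := fun j w hw => by have := h.hmem j w hw; tauto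

theorem NpcTri.rot {κ : Type} {e : κ → Finset ℕ+} {a x y z : ℕ+} (h : NpcTri e a x y z) :
    NpcTri e a y z x where
  hx := fun j hj => (h.hy j hj).symm
  hy := fun j hj => (h.hz j hj).symm
  hz := h.hx
  hall := fun j hj => h.hall j ⟨hj.2.2, hj.1, hj.2.1⟩
  hmem := fun j w hw => by have := h.hmem j w hw; tauto

theorem NpcTri.ne {κ : Type} {e : κ → Finset ℕ+} {a x y z : ℕ+} (h : NpcTri e a x y z) {k l : κ}
    (hk : x ∉ e k) (hl : y ∉ e l) : k ≠ l := by
  rintro rfl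
  exact hl (h.hx k hk).1

theorem npc_triG' {κ : Type} {e : κ → Finset ℕ+} {P Q : Finset ℕ+} {a : ℕ+}
    (haP : a ∉ P) (haQ : a ∉ Q)
    (hb : ∀ S : κ → Prop, (∃ x ∈ P, ∀ j, S j → x ∈ e j) ∨ (∃ x ∈ Q, ∀ j, ¬ S j → x ∈ e j))
    {x y z : ℕ+} (h : NpcTri e a x y z)
    {m m' k l : κ} (hm : z ∉ e m) (hm' : z ∉ e m') (hmm : m ≠ m') (hk : x ∉ e k) (hl : y ∉ e l) :
    (x ∈ P ∧ x ∈ Q) ∨ (y ∈ P ∧ y ∈ Q) :=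
  npc_triG haP haQ hb h.hmem hmm hm hm' hk hl (h.ne hk hl) (h.rot.rot.ne hm hk)
    (h.rot.ne hl hm).symm (h.rot.rot.ne hm' hk) (h.rot.ne hl hm').symm

theorem npc_triF {κ : Type} {e : κ → Finset ℕ+} {P Q : Finset ℕ+} {a : ℕ+}
    (haP : a ∉ P) (haQ : a ∉ Q)
    (hPQ : ∀ x, x ∈ P → x ∈ Q → ∀ k, ∃ j, j ≠ k ∧ x ∉ e j)
    (hb : ∀ S : κ → Prop, (∃ x ∈ P, ∀ j, S j → x ∈ e j) ∨ (∃ x ∈ Q, ∀ j, ¬ S j → x ∈ e j))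
    {x y z : ℕ+} (ht : NpcTri e a x y z)
    {m k l : κ} (hm : z ∉ e m) (hk : x ∉ e k) (hl : y ∉ e l)
    (hxx : x ∈ P ∧ x ∈ Q) (hyy : y ∈ P ∧ y ∈ Q) : False := by
  obtain ⟨hxP, hxQ⟩ := hxx
  obtain ⟨hyP, hyQ⟩ := hyy
  have hmem := ht.hmem
  have nzx : ∀ {m k}, z ∉ e m → x ∉ e k → m ≠ k := fun h1 h2 => ht.rot.rot.ne h1 h2
  have nzy : ∀ {m k}, z ∉ e m → y ∉ e k → m ≠ k := fun h1 h2 => (ht.rot.ne h2 h1).symm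
  have nxy : ∀ {m k}, x ∉ e m → y ∉ e k → m ≠ k := fun h1 h2 => ht.ne h1 h2
  obtain ⟨k', hkk, hk'⟩ := hPQ x hxP hxQ k
  obtain ⟨l', hll, hl'⟩ := hPQ y hyP hyQ l
  have n1 := nxy hk hl
  have n2 := nxy hk hl'
  have n3 := nxy hk' hl
  have n4 := nxy hk' hl'
  have n5 := nzx hm hk
  have n6 := nzx hm hk'
  have n7 := nzy hm hl
  have n8 := nzy hm hl'
  have first : ∀ R : Finset ℕ+, a ∉ R → ∀ w ∈ R, w ∈ e m → w ∈ e k → w ∈ e l → False := by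
    intro R hR w hw h1 h2 h3
    rcases hmem m w h1 with rfl | rfl | rfl | rfl
    · exact hR hw
    · exact hk h2
    · exact hl h3
    · exact hm h1
  have second : ∀ R : Finset ℕ+, a ∉ R → ∀ w ∈ R, w ∈ e k' → w ∈ e l' → w = z := by
    intro R hR w hw h1 h2
    rcases hmem k' w h1 with rfl | rfl | rfl | rfl
    · exact (hR hw).elim
    · exact (hk' h1).elim
    · exact (hl' h2).elim
    · rfl
  have zQ : z ∈ Q := by
    rcases hb (fun j => j = m ∨ j = k ∨ j = l) with ⟨w, hw, h⟩ | ⟨w, hw, h⟩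
    · exact (first P haP w hw (h m (by simp)) (h k (by simp)) (h l (by simp))).elim
    · have := second Q haQ w hw (h k' (by simp [n6.symm, hkk, n3]))
        (h l' (by simp [n8.symm, hll, n2.symm]))
      exact this ▸ hw
  have zP : z ∈ P := by
    rcases hb (fun j => j = k' ∨ j = l') with ⟨w, hw, h⟩ | ⟨w, hw, h⟩
    · have := second P haP w hw (h k' (by simp)) (h l' (by simp))
      exact this ▸ hw
    · exact (first Q haQ w hw (h m (by simp [n6, n8])) (h k (by simp [hkk.symm, n2]))
        (h l (by simp [hll.symm, n3.symm]))).elim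
  obtain ⟨m', hmm, hm'⟩ := hPQ z zP zQ m
  rcases hb (fun j => j = m ∨ j = k ∨ j = l) with ⟨w, hw, h⟩ | ⟨w, hw, h⟩
  · exact (first P haP w hw (h m (by simp)) (h k (by simp)) (h l (by simp))).elim
  · have := second Q haQ w hw (h k' (by simp [n6.symm, hkk, n3]))
      (h l' (by simp [n8.symm, hll, n2.symm]))
    subst this
    exact hm' (h m' (by simp [hmm, nzx hm' hk, nzy hm' hl]))

theorem npc_triH {κ : Type} {e : κ → Finset ℕ+} {P Q : Finset ℕ+} {a : ℕ+}
    (haP : a ∉ P) (haQ : a ∉ Q)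
    (hPQ : ∀ x, x ∈ P → x ∈ Q → ∀ k, ∃ j, j ≠ k ∧ x ∉ e j)
    (hb : ∀ S : κ → Prop, (∃ x ∈ P, ∀ j, S j → x ∈ e j) ∨ (∃ x ∈ Q, ∀ j, ¬ S j → x ∈ e j))
    {x y z : ℕ+} (ht : NpcTri e a x y z)
    {m k l : κ} (hm : z ∉ e m) (hk : x ∉ e k) (hl : y ∉ e l)
    (hxx : x ∈ P ∧ x ∈ Q) : False := by
  obtain ⟨k', hkk, hk'⟩ := hPQ x hxx.1 hxx.2 k
  rcases npc_triG' haP haQ hb ht.rot hk hk' hkk.symm hl hm with h | h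
  · exact npc_triF haP haQ hPQ hb ht hm hk hl hxx h
  · exact npc_triF haP haQ hPQ hb ht.rot.rot.swap hl hk hm hxx h

theorem npc_triK {κ : Type} {e : κ → Finset ℕ+} {P Q : Finset ℕ+} {a : ℕ+}
    (haP : a ∉ P) (haQ : a ∉ Q)
    (hPQ : ∀ x, x ∈ P → x ∈ Q → ∀ k, ∃ j, j ≠ k ∧ x ∉ e j)
    (hb : ∀ S : κ → Prop, (∃ x ∈ P, ∀ j, S j → x ∈ e j) ∨ (∃ x ∈ Q, ∀ j, ¬ S j → x ∈ e j))
    {x y z : ℕ+} (ht : NpcTri e a x y z)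
    {m m' k l : κ} (hm : z ∉ e m) (hm' : z ∉ e m') (hmm : m ≠ m') (hk : x ∉ e k) (hl : y ∉ e l) :
    False := by
  rcases npc_triG' haP haQ hb ht hm hm' hmm hk hl with h | h
  · exact npc_triH haP haQ hPQ hb ht hm hk hl h
  · exact npc_triH haP haQ hPQ hb ht.swap hm hl hk h

theorem npc_tri {κ : Type} {e : κ → Finset ℕ+} {P Q : Finset ℕ+} {a : ℕ+}
    (haP : a ∉ P) (haQ : a ∉ Q)
    (hPQ : ∀ x, x ∈ P → x ∈ Q → ∀ k, ∃ j, j ≠ k ∧ x ∉ e j)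
    (hb : ∀ S : κ → Prop, (∃ x ∈ P, ∀ j, S j → x ∈ e j) ∨ (∃ x ∈ Q, ∀ j, ¬ S j → x ∈ e j))
    {x y z : ℕ+} (hm3 : ∀ j1 j2 j3 : κ, ∃ j, j ≠ j1 ∧ j ≠ j2 ∧ j ≠ j3)
    (ht : NpcTri e a x y z)
    {m k l : κ} (hm : z ∉ e m) (hk : x ∉ e k) (hl : y ∉ e l) : False := by
  obtain ⟨r, h1, h2, h3⟩ := hm3 m k l
  by_cases hr1 : z ∉ e r
  · exact npc_triK haP haQ hPQ hb ht hm hr1 h1.symm hk hl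
  by_cases hr2 : x ∉ e r
  · exact npc_triK haP haQ hPQ hb ht.rot hk hr2 h2.symm hl hm
  by_cases hr3 : y ∉ e r
  · exact npc_triK haP haQ hPQ hb ht.rot.rot hl hr3 h3.symm hm hk
  push Not at hr1 hr2 hr3
  exact ht.hall r ⟨hr2, hr3, hr1⟩

theorem npc_star {κ : Type} {e : κ → Finset ℕ+} {P Q : Finset ℕ+} {a : ℕ+}
    (he : ∀ j, (e j).card = 3) (hae : ∀ j, a ∈ e j)
    (haP : a ∉ P) (haQ : a ∉ Q)
    (hP : ∀ x ∈ P, ∃ j, x ∉ e j) (hQ : ∀ x ∈ Q, ∃ j, x ∉ e j)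
    (hPQ : ∀ x, x ∈ P → x ∈ Q → ∀ k, ∃ j, j ≠ k ∧ x ∉ e j)
    (hb : ∀ S : κ → Prop, (∃ x ∈ P, ∀ j, S j → x ∈ e j) ∨ (∃ x ∈ Q, ∀ j, ¬ S j → x ∈ e j))
    (hm3 : ∀ j1 j2 j3 : κ, ∃ j, j ≠ j1 ∧ j ≠ j2 ∧ j ≠ j3) (h0 : Nonempty κ)
    {z : ℕ+} (hza : z ≠ a) (hz : ∀ j, z ∈ e j) : False := by
  have zP : z ∉ P := fun h => by obtain ⟨j, hj⟩ := hP z h; exact hj (hz j)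
  have zQ : z ∉ Q := fun h => by obtain ⟨j, hj⟩ := hQ z h; exact hj (hz j)
  choose x hxa hxz hxe hx using fun j => npc_z (he j) (hae j) (hz j) hza.symm
  have hmem : ∀ j w, (w ∈ P ∨ w ∈ Q) → (w ∈ e j ↔ w = x j) := by
    intro j w hw
    constructor
    · intro h; have := hx j w h; grind
    · rintro rfl; exact hxe j
  have pairs : ∀ j1 j2 j3 j4, x j1 ≠ x j2 → x j3 ≠ x j4 → j1 ≠ j3 → j1 ≠ j4 → j2 ≠ j3 →
      j2 ≠ j4 → False := by
    intro j1 j2 j3 j4 h1 h2 h3 h4 h5 h6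
    rcases hb (fun j => j = j1 ∨ j = j2) with ⟨w, hw, h⟩ | ⟨w, hw, h⟩
    · have := (hmem j1 w (Or.inl hw)).1 (h j1 (by simp))
      have := (hmem j2 w (Or.inl hw)).1 (h j2 (by simp))
      grind
    · have := (hmem j3 w (Or.inr hw)).1 (h j3 (by grind))
      have := (hmem j4 w (Or.inr hw)).1 (h j4 (by grind))
      grind
  obtain ⟨x0, r, hr⟩ : ∃ x0 r, ∀ j, j ≠ r → x j = x0 := by
    by_cases hc : ∃ j1 j2, x j1 ≠ x j2
    · obtain ⟨j1, j2, h12⟩ := hc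
      obtain ⟨j3, a1, a2, -⟩ := hm3 j1 j2 j2
      obtain ⟨j4, b1, b2, b3⟩ := hm3 j1 j2 j3
      have hc : ∀ j, j ≠ j1 → j ≠ j2 → x j = x j3 := by
        intro j g1 g2
        by_contra hne
        exact pairs j1 j2 j j3 h12 hne g1.symm a1.symm g2.symm a2.symm
      have h4 := hc j4 b1 b2
      by_cases hd : x j3 = x j1
      · exact ⟨x j1, j2, by grind⟩
      · refine ⟨x j2, j1, ?_⟩
        have : x j3 = x j2 := by
          by_contra hne
          exact pairs j1 j3 j2 j4 (by grind) (by grind) (by grind) (by grind) (by grind) (by grind)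
        grind
    · push Not at hc
      obtain ⟨r⟩ := h0
      exact ⟨x r, r, fun j _ => hc j r⟩
  have hx0 : ¬ (x0 ∈ P ∧ x0 ∈ Q) := by
    rintro ⟨h1, h2⟩
    obtain ⟨j, hj, hj'⟩ := hPQ x0 h1 h2 r
    have := hxe j
    grind
  obtain ⟨s, s1, -, -⟩ := hm3 r r r
  obtain ⟨s', s2, s3, -⟩ := hm3 r s s
  by_cases h1 : x0 ∈ P
  · rcases hb (fun j => j ≠ s) with ⟨w, hw, h⟩ | ⟨w, hw, h⟩
    · have g1 := (hmem s' w (Or.inl hw)).1 (h s' (by grind))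
      have g2 := (hmem r w (Or.inl hw)).1 (h r (by grind))
      have g3 := hr s' s2
      obtain ⟨j, hj⟩ := hP x0 h1
      have g4 := hxe j
      by_cases hjr : j = r
      · grind
      · have := hr j hjr
        grind
    · have g1 := (hmem s w (Or.inr hw)).1 (h s (by grind))
      have g3 := hr s s1
      grind
  · rcases hb (fun j => j = s) with ⟨w, hw, h⟩ | ⟨w, hw, h⟩
    · have g1 := (hmem s w (Or.inl hw)).1 (h s (by grind))
      have g3 := hr s s1
      grind
    · have g1 := (hmem s' w (Or.inr hw)).1 (h s' (by grind))
      have g2 := (hmem r w (Or.inr hw)).1 (h r (by grind))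
      have g3 := hr s' s2
      obtain ⟨j, hj⟩ := hQ x0 (by grind)
      have g4 := hxe j
      by_cases hjr : j = r
      · grind
      · have := hr j hjr
        grind

theorem npc_disj {κ : Type} {e : κ → Finset ℕ+} {P Q : Finset ℕ+} {a : ℕ+}
    (he : ∀ j, (e j).card = 3) (hae : ∀ j, a ∈ e j) (hPc : P.card = 3) (hQc : Q.card = 3)
    (haP : a ∉ P) (haQ : a ∉ Q)
    (hPQ : ∀ x, x ∈ P → x ∈ Q → ∀ k, ∃ j, j ≠ k ∧ x ∉ e j)
    (hb : ∀ S : κ → Prop, (∃ x ∈ P, ∀ j, S j → x ∈ e j) ∨ (∃ x ∈ Q, ∀ j, ¬ S j → x ∈ e j))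
    (hm3 : ∀ j1 j2 j3 : κ, ∃ j, j ≠ j1 ∧ j ≠ j2 ∧ j ≠ j3)
    {r1 r2 : κ} (hr : r1 ≠ r2) (hd : ∀ x, x ∈ e r1 → x ∈ e r2 → x = a) :
    ∃ i k r, i ≠ a ∧ k ≠ a ∧ i ≠ k ∧ i ∈ Q ∧ i ∉ P ∧ k ∈ P ∧ k ∉ Q ∧ i ∉ e r ∧ k ∉ e r ∧
      ∀ j, j ≠ r → i ∈ e j ∧ k ∈ e j := by
  obtain ⟨i, hiQ, hi⟩ : ∃ i ∈ Q, ∀ j, j ≠ r1 → j ≠ r2 → i ∈ e j := by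
    rcases hb (fun j => j = r1 ∨ j = r2) with ⟨w, hw, h⟩ | ⟨w, hw, h⟩
    · have := hd w (h r1 (by simp)) (h r2 (by simp))
      grind
    · exact ⟨w, hw, by grind⟩
  obtain ⟨k, hkP, hk⟩ : ∃ k ∈ P, ∀ j, j ≠ r1 → j ≠ r2 → k ∈ e j := by
    rcases hb (fun j => ¬ (j = r1 ∨ j = r2)) with ⟨w, hw, h⟩ | ⟨w, hw, h⟩
    · exact ⟨w, hw, by grind⟩
    · have := hd w (h r1 (by simp)) (h r2 (by simp))
      grind
  obtain ⟨f, f1, f2, -⟩ := hm3 r1 r2 r2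
  obtain ⟨g, g1, g2, g3⟩ := hm3 r1 r2 f
  have hia : i ≠ a := by grind
  have hka : k ≠ a := by grind
  have A : ∀ f g, f ≠ r1 → f ≠ r2 → g ≠ r1 → g ≠ r2 → f ≠ g →
      (∃ x ∈ P, x ∈ e r1 ∧ x ∈ e f) ∨ (∃ x ∈ Q, x ∈ e r2 ∧ x ∈ e g) := by
    intro f g _ _ _ _ _
    rcases hb (fun j => j = r1 ∨ j = f) with ⟨w, hw, h⟩ | ⟨w, hw, h⟩
    · exact Or.inl ⟨w, hw, h r1 (by simp), h f (by simp)⟩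
    · exact Or.inr ⟨w, hw, h r2 (by grind), h g (by grind)⟩
  have B : ∀ f g, f ≠ r1 → f ≠ r2 → g ≠ r1 → g ≠ r2 → f ≠ g →
      (∃ x ∈ P, x ∈ e r2 ∧ x ∈ e f) ∨ (∃ x ∈ Q, x ∈ e r1 ∧ x ∈ e g) := by
    intro f g _ _ _ _ _
    rcases hb (fun j => j = r2 ∨ j = f) with ⟨w, hw, h⟩ | ⟨w, hw, h⟩
    · exact Or.inl ⟨w, hw, h r2 (by simp), h f (by simp)⟩
    · exact Or.inr ⟨w, hw, h r1 (by grind), h g (by grind)⟩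
  have dbl : ∀ u, u ∈ P → u ∈ Q → (∀ j, j ≠ r1 → j ≠ r2 → u ∈ e j) → u ∉ e r1 ∧ u ∉ e r2 := by
    intro u uP uQ hu
    obtain ⟨j, h1, h2⟩ := hPQ u uP uQ r1
    obtain ⟨j', h1', h2'⟩ := hPQ u uP uQ r2
    grind
  by_cases hik : i = k
  · exfalso
    subst hik
    obtain ⟨i1, i2⟩ := dbl i hkP hiQ hi
    choose y hay hiy hye hy using fun f : {f // f ≠ r1 ∧ f ≠ r2} =>
      npc_z (he f.1) (hae f.1) (hi f.1 f.2.1 f.2.2) hia.symm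
    have A' : ∀ f g, f ≠ g → (y f ∈ P ∧ y f ∈ e r1) ∨ (y g ∈ Q ∧ y g ∈ e r2) := by
      intro f g hfg
      have hfg' : f.1 ≠ g.1 := fun h => hfg (Subtype.ext h)
      rcases A f.1 g.1 f.2.1 f.2.2 g.2.1 g.2.2 hfg' with ⟨w, h1, h2, h3⟩ | ⟨w, h1, h2, h3⟩
      · have := hy f w h3; grind
      · have := hy g w h3; grind
    have B' : ∀ f g, f ≠ g → (y f ∈ P ∧ y f ∈ e r2) ∨ (y g ∈ Q ∧ y g ∈ e r1) := by
      intro f g hfg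
      have hfg' : f.1 ≠ g.1 := fun h => hfg (Subtype.ext h)
      rcases B f.1 g.1 f.2.1 f.2.2 g.2.1 g.2.2 hfg' with ⟨w, h1, h2, h3⟩ | ⟨w, h1, h2, h3⟩
      · have := hy f w h3; grind
      · have := hy g w h3; grind
    have C : ∀ f g, f ≠ g →
        (y f ∈ P ∧ y f ∈ Q ∧ y g ∈ P ∧ y g ∈ Q ∧ y f ∈ e r1 ∧ y g ∈ e r1) ∨
        (y f ∈ P ∧ y f ∈ Q ∧ y g ∈ P ∧ y g ∈ Q ∧ y f ∈ e r2 ∧ y g ∈ e r2) := by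
      intro f g hfg
      have h1 := A' f g hfg
      have h2 := A' g f hfg.symm
      have h3 := B' f g hfg
      have h4 := B' g f hfg.symm
      have h5 := hd (y f)
      have h6 := hd (y g)
      have h7 := hay f
      have h8 := hay g
      clear A' B' A B hb hPQ hm3 hy hi hk hd
      grind
    have D : ∀ s1 s2 : κ, s1 ≠ s2 → (∀ x, x ∈ e s1 → x ∈ e s2 → x = a) → i ∉ e s1 → i ∉ e s2 →
        (∀ j, j ≠ s1 → j ≠ s2 → j ≠ r1 ∧ j ≠ r2) → (∀ f : {f // f ≠ r1 ∧ f ≠ r2}, f.1 ≠ s1 ∧ f.1 ≠ s2) →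
        (∀ f g, f ≠ g → y f ∈ e s1 →
          (y f ∈ P ∧ y f ∈ Q ∧ y g ∈ P ∧ y g ∈ Q ∧ y f ∈ e s1 ∧ y g ∈ e s1)) →
        ∀ f g, f ≠ g → y f ∈ e s1 → False := by
      intro s1 s2 hs hds is1 is2 hss hff hC f g hfg hfs
      obtain ⟨c1, c2, c3, c4, c5, c6⟩ := hC f g hfg hfs
      obtain ⟨j, hj, hj'⟩ := hPQ (y f) c1 c2 s2
      have hjs : j ≠ s1 := by grind
      let h : {f // f ≠ r1 ∧ f ≠ r2} := ⟨j, hss j hjs hj⟩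
      have hfh : f ≠ h := by
        intro hh
        apply hj'
        have := hye f
        rw [hh] at this
        rw [hh]
        exact this
      obtain ⟨d1, d2, d3, d4, d5, d6⟩ := hC f h hfh hfs
      have hyy : y f ≠ y h := by
        intro hh
        apply hj'
        rw [hh]
        exact hye h
      have iyf := hiy f
      have iyh := hiy h
      have yfe : y f ∉ e h.1 := hj'
      have yff := hay f
      have yhh := hay h
      rcases hb (fun j => j = s2) with ⟨w, hw, hh⟩ | ⟨w, hw, hh⟩
      · have w1 := hh s2 rfl
        have w2 := npc_four hPc hkP d1 d3 hw iyf iyh hyy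
        have w3 := hds w
        rcases w2 with rfl | rfl | rfl
        · exact is2 w1
        · exact yff (w3 d5 w1).symm
        · exact yhh (w3 d6 w1).symm
      · have w1 := hh s1 hs
        have w2 := hh f.1 (hff f).2
        have w3 := hh h.1 (hff h).2
        have w4 := npc_four hQc hiQ d2 d4 hw iyf iyh hyy
        rcases w4 with rfl | rfl | rfl
        · exact is1 w1
        · exact yfe w3
        · have := hy f _ w2
          rcases this with h | h | h
          · exact yhh h.symm
          · exact iyh h.symm
          · exact hyy h.symm
    have nfg : (⟨f, f1, f2⟩ : {f // f ≠ r1 ∧ f ≠ r2}) ≠ ⟨g, g1, g2⟩ := by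
      intro h; apply g3; exact (congrArg Subtype.val h).symm
    have disj : ∀ f, y f ∈ e r1 → y f ∈ e r2 → False := by
      intro f h1 h2
      exact hay f (hd _ h1 h2).symm
    rcases C ⟨f, f1, f2⟩ ⟨g, g1, g2⟩ nfg with h | h
    · refine D r1 r2 hr hd i1 i2 (fun j h1 h2 => ⟨h1, h2⟩) (fun f => f.2) ?_ _ _ nfg h.2.2.2.2.1
      intro f g hfg h1
      rcases C f g hfg with h | h
      · exact h
      · exact (disj f h1 h.2.2.2.2.1).elim
    · refine D r2 r1 hr.symm (fun x h1 h2 => hd x h2 h1) i2 i1 (fun j h1 h2 => ⟨h2, h1⟩)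
        (fun f => ⟨f.2.2, f.2.1⟩) ?_ _ _ nfg h.2.2.2.2.1
      intro f g hfg h1
      rcases C f g hfg with h | h
      · exact (disj f h.2.2.2.2.1 h1).elim
      · exact h
  · have ef : ∀ w ∈ e f, w = a ∨ w = i ∨ w = k := fun w hw =>
      npc_four (he f) (hae f) (hi f f1 f2) (hk f f1 f2) hw hia.symm hka.symm hik
    have eg : ∀ w ∈ e g, w = a ∨ w = i ∨ w = k := fun w hw =>
      npc_four (he g) (hae g) (hi g g1 g2) (hk g g1 g2) hw hia.symm hka.symm hik
    have A1 := A f g f1 f2 g1 g2 g3.symm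
    have B1 := B f g f1 f2 g1 g2 g3.symm
    have A2 : (i ∈ P ∧ i ∈ e r1) ∨ (k ∈ e r1) ∨ (i ∈ e r2) ∨ (k ∈ Q ∧ k ∈ e r2) := by
      rcases A1 with ⟨w, h1, h2, h3⟩ | ⟨w, h1, h2, h3⟩
      · have := ef w h3; grind
      · have := eg w h3; grind
    have B2 : (i ∈ P ∧ i ∈ e r2) ∨ (k ∈ e r2) ∨ (i ∈ e r1) ∨ (k ∈ Q ∧ k ∈ e r1) := by
      rcases B1 with ⟨w, h1, h2, h3⟩ | ⟨w, h1, h2, h3⟩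
      · have := ef w h3; grind
      · have := eg w h3; grind
    have di := dbl i
    have dk := dbl k
    have d1 := hd i
    have d2 := hd k
    have iP : i ∉ P := by
      intro h
      have := di h hiQ hi
      by_cases hkQ : k ∈ Q
      · have := dk hkP hkQ hk
        grind
      · grind
    have kQ : k ∉ Q := by
      intro h
      have := dk hkP h hk
      grind
    by_cases hc : k ∈ e r1
    · refine ⟨i, k, r2, hia, hka, hik, hiQ, iP, hkP, kQ, ?_, ?_, ?_⟩
      · grind
      · grind
      · intro j hj
        by_cases hj1 : j = r1
        · subst hj1; grind
        · exact ⟨hi j hj1 hj, hk j hj1 hj⟩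
    · refine ⟨i, k, r1, hia, hka, hik, hiQ, iP, hkP, kQ, ?_, ?_, ?_⟩
      · grind
      · grind
      · intro j hj
        by_cases hj1 : j = r2
        · subst hj1; grind
        · exact ⟨hi j hj hj1, hk j hj hj1⟩

theorem npc_tight {κ : Type} {e : κ → Finset ℕ+} {P Q : Finset ℕ+} {a : ℕ+}
    (he : ∀ j, (e j).card = 3) (hae : ∀ j, a ∈ e j) (hPc : P.card = 3) (hQc : Q.card = 3)
    (haP : a ∉ P) (haQ : a ∉ Q)
    (hP : ∀ x ∈ P, ∃ j, x ∉ e j) (hQ : ∀ x ∈ Q, ∃ j, x ∉ e j)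
    (hPQ : ∀ x, x ∈ P → x ∈ Q → ∀ k, ∃ j, j ≠ k ∧ x ∉ e j)
    (hb : ∀ S : κ → Prop, (∃ x ∈ P, ∀ j, S j → x ∈ e j) ∨ (∃ x ∈ Q, ∀ j, ¬ S j → x ∈ e j))
    (hm3 : ∀ j1 j2 j3 : κ, ∃ j, j ≠ j1 ∧ j ≠ j2 ∧ j ≠ j3) (h0 : Nonempty κ) :
    ∃ i k r, i ≠ a ∧ k ≠ a ∧ i ≠ k ∧ i ∈ Q ∧ i ∉ P ∧ k ∈ P ∧ k ∉ Q ∧ i ∉ e r ∧ k ∉ e r ∧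
      ∀ j, j ≠ r → i ∈ e j ∧ k ∈ e j := by
  by_cases hd : ∃ r1 r2, r1 ≠ r2 ∧ ∀ x, x ∈ e r1 → x ∈ e r2 → x = a
  · obtain ⟨r1, r2, h1, h2⟩ := hd
    exact npc_disj he hae hPc hQc haP haQ hPQ hb hm3 h1 h2
  exfalso
  have hint : ∀ r1 r2, ∃ x, x ∈ e r1 ∧ x ∈ e r2 ∧ x ≠ a := by
    intro r1 r2
    by_cases h : r1 = r2
    · subst h
      obtain ⟨y, z, h1, _, _, h2, _⟩ := npc_yz (he r1) (hae r1)
      exact ⟨y, h2, h2, h1.symm⟩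
    · by_contra hcon
      exact hd ⟨r1, r2, h, by grind⟩
  have hstar : ∀ z, z ≠ a → ∃ j, z ∉ e j := by
    intro z hz
    by_contra hcon
    push Not at hcon
    exact npc_star he hae haP haQ hP hQ hPQ hb hm3 h0 hz hcon
  obtain ⟨m⟩ := h0
  obtain ⟨x, y, hax, hay, hxy, hxm, hym, hm⟩ := npc_yz (he m) (hae m)
  obtain ⟨k, hk⟩ := hstar x hax.symm
  obtain ⟨l, hl⟩ := hstar y hay.symm
  have yk : y ∈ e k := by obtain ⟨w, h1, h2, h3⟩ := hint m k; have := hm w h1; grind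
  have xl : x ∈ e l := by obtain ⟨w, h1, h2, h3⟩ := hint m l; have := hm w h1; grind
  obtain ⟨z, haz, hyz, hzk, hkz⟩ := npc_z (he k) (hae k) yk hay
  have zl : z ∈ e l := by obtain ⟨w, h1, h2, h3⟩ := hint k l; have := hkz w h1; grind
  have hxz : x ≠ z := by rintro rfl; exact hk hzk
  have hlz : ∀ w ∈ e l, w = a ∨ w = x ∨ w = z := fun w hw =>
    npc_four (he l) (hae l) xl zl hw hax haz hxz
  have hzm : z ∉ e m := by intro h; have := hm z h; grind
  have hx : ∀ j, x ∉ e j → y ∈ e j ∧ z ∈ e j := by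
    intro j hj
    obtain ⟨w, h1, h2, h3⟩ := hint m j
    obtain ⟨w', h1', h2', h3'⟩ := hint l j
    have := hm w h1; have := hlz w' h1'
    grind
  have hy : ∀ j, y ∉ e j → x ∈ e j ∧ z ∈ e j := by
    intro j hj
    obtain ⟨w, h1, h2, h3⟩ := hint m j
    obtain ⟨w', h1', h2', h3'⟩ := hint k j
    have := hm w h1; have := hkz w' h1'
    grind
  have hz : ∀ j, z ∉ e j → x ∈ e j ∧ y ∈ e j := by
    intro j hj
    obtain ⟨w, h1, h2, h3⟩ := hint l j
    obtain ⟨w', h1', h2', h3'⟩ := hint k j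
    have := hlz w h1; have := hkz w' h1'
    grind
  have hall : ∀ j, ¬ (x ∈ e j ∧ y ∈ e j ∧ z ∈ e j) := by
    rintro j ⟨h1, h2, h3⟩
    have := npc_four (he j) (hae j) h1 h2 h3 hax hay hxy
    grind
  have hmem : ∀ j, ∀ w ∈ e j, w = a ∨ w = x ∨ w = y ∨ w = z := by
    intro j w hw
    by_cases c1 : x ∈ e j
    · by_cases c2 : y ∈ e j
      · have := npc_four (he j) (hae j) c1 c2 hw hax hay hxy
        grind
      · have := npc_four (he j) (hae j) c1 (hy j c2).2 hw hax haz hxz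
        grind
    · have := npc_four (he j) (hae j) (hx j c1).1 (hx j c1).2 hw hay haz hyz
      grind
  exact npc_tri haP haQ hPQ hb hm3 ⟨hx, hy, hz, hall, hmem⟩ hzm hk hl

theorem npc_core {ι : Type} [Fintype ι] (t : ι → Finset ℕ+) (ht : ∀ j, (t j).card = 3)
    (hn : 6 ≤ Fintype.card ι) (hf : ∀ x k, ∃ j, j ≠ k ∧ x ∉ t j)
    (hs : ¬ ∃ a b c j1 j2 j3, a ≠ b ∧ a ≠ c ∧ b ≠ c ∧ j1 ≠ j2 ∧ j1 ≠ j3 ∧ j2 ≠ j3 ∧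
      (∀ j, j ≠ j1 → j ≠ j2 → j ≠ j3 → t j = {a, b, c}) ∧
      a ∈ t j1 ∧ b ∉ t j1 ∧ c ∉ t j1 ∧
      a ∉ t j2 ∧ b ∈ t j2 ∧ c ∉ t j2 ∧
      a ∉ t j3 ∧ b ∉ t j3 ∧ c ∈ t j3) : NpcGood t := by
  classical
  have more : ∀ j1 j2 j3 j4 j5 : ι, ∃ j, j ≠ j1 ∧ j ≠ j2 ∧ j ≠ j3 ∧ j ≠ j4 ∧ j ≠ j5 := by
    intro j1 j2 j3 j4 j5
    by_contra hcon
    push Not at hcon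
    have h1 : (Finset.univ : Finset ι) ⊆ {j1, j2, j3, j4, j5} := by
      intro j _
      have := hcon j
      simp only [Finset.mem_insert, Finset.mem_singleton]
      tauto
    have h2 := Finset.card_le_card h1
    have h3 : ({j1, j2, j3, j4, j5} : Finset ι).card ≤ 5 := Finset.card_le_five
    rw [Finset.card_univ] at h2
    omega
  have h0 : Nonempty ι := Fintype.card_pos_iff.1 (by omega)
  by_contra hbad
  by_cases h3 : ∀ x k l, ∃ j, j ≠ k ∧ j ≠ l ∧ x ∉ t j
  · exact hbad (npc_k3 t ht h0 h3)
  push Not at h3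
  obtain ⟨a, p, q, ha⟩ := h3
  have hap : a ∉ t p := by obtain ⟨j, h1, h2⟩ := hf a q; have := ha j; grind
  have haq : a ∉ t q := by obtain ⟨j, h1, h2⟩ := hf a p; have := ha j; grind
  have hpq : p ≠ q := by
    rintro rfl
    obtain ⟨j, h1, h2⟩ := hf a p
    exact h2 (ha j h1 h1)
  have key := npc_tight (κ := {j // j ≠ p ∧ j ≠ q}) (e := fun j => t j.1) (P := t p) (Q := t q)
    (a := a) (fun j => ht j.1) (fun j => ha j.1 j.2.1 j.2.2) (ht p) (ht q) hap haq
    (by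
      intro x hx
      obtain ⟨j, h1, h2⟩ := hf x q
      exact ⟨⟨j, by grind, h1⟩, h2⟩)
    (by
      intro x hx
      obtain ⟨j, h1, h2⟩ := hf x p
      exact ⟨⟨j, h1, by grind⟩, h2⟩)
    (by
      intro x hx hx' k
      obtain ⟨j, h1, h2⟩ := hf x k.1
      exact ⟨⟨j, by grind, by grind⟩, by grind, h2⟩)
    (by
      intro S
      obtain ⟨x, hx | hx⟩ := npc_bad hbad (fun j => j = p ∨ ∃ h : j ≠ p ∧ j ≠ q, S ⟨j, h⟩)
      · left
        exact ⟨x, hx p (Or.inl rfl), fun j hj => hx j.1 (Or.inr ⟨j.2, hj⟩)⟩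
      · right
        refine ⟨x, hx q ?_, fun j hj => hx j.1 ?_⟩
        · rintro (h | ⟨h, _⟩)
          · exact hpq h.symm
          · exact h.2 rfl
        · rintro (h | ⟨_, h⟩)
          · exact j.2.1 h
          · exact hj h)
    (by
      intro j1 j2 j3
      obtain ⟨j, h1, h2, h3, h4, h5⟩ := more j1.1 j2.1 j3.1 p q
      exact ⟨⟨j, h4, h5⟩, by grind, by grind, by grind⟩)
    (by
      obtain ⟨j, h1, h2, _⟩ := more p q q q q
      exact ⟨⟨j, h1, h2⟩⟩)
  obtain ⟨i, k, r, hia, hka, hik, hiQ, hiP, hkP, hkQ, hir, hkr, hall⟩ := key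
  refine hs ⟨a, i, k, r.1, q, p, hia.symm, hka.symm, hik, r.2.2, r.2.1, hpq.symm, ?_,
    ha _ r.2.1 r.2.2, hir, hkr, haq, hiQ, hkQ, hap, hiP, hkP⟩
  intro j h1 h2 h3
  obtain ⟨g1, g2⟩ := hall ⟨j, h3, h2⟩ (by grind)
  ext w
  simp only [Finset.mem_insert, Finset.mem_singleton]
  constructor
  · intro hw
    exact npc_four (ht j) (ha j h3 h2) g1 g2 hw hia.symm hka.symm hik
  · rintro (rfl | rfl | rfl)
    · exact ha j h3 h2
    · exact g1
    · exact g2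

/-- a class with empty intersection contains one of size at most four -/
theorem npc_small {ι : Type} (t : ι → Finset ℕ+) (ht : ∀ j, (t j).card = 3) (S : ι → Prop)
    (hS : ∀ x, ∃ j, S j ∧ x ∉ t j) :
    ∃ A : Finset ι, (∀ j ∈ A, S j) ∧ A.card ≤ 4 ∧ ∀ x, ∃ j ∈ A, x ∉ t j := by
  classical
  obtain ⟨o, ho, -⟩ := hS 1
  obtain ⟨x, y, z, -, -, -, -, -, -, h⟩ := npc_xyz (ht o)
  obtain ⟨b, hb, hb'⟩ := hS x
  obtain ⟨c, hc, hc'⟩ := hS y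
  obtain ⟨d, hd, hd'⟩ := hS z
  refine ⟨{o, b, c, d}, ?_, Finset.card_le_four, ?_⟩
  · intro j hj
    simp only [Finset.mem_insert, Finset.mem_singleton] at hj
    rcases hj with rfl | rfl | rfl | rfl <;> assumption
  · intro w
    by_cases hw : w ∈ t o
    · rcases h w hw with rfl | rfl | rfl
      · exact ⟨b, by simp, hb'⟩
      · exact ⟨c, by simp, hc'⟩
      · exact ⟨d, by simp, hd'⟩
    · exact ⟨o, by simp, hw⟩

theorem npc_not_special (T : Multiset (Finset ℕ+)) (A B : Multiset (Finset ℕ+)) (hAB : A + B ≤ T)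
    (hA : ∀ i : ℕ+, (∃ t ∈ T, i ∈ t) → ∃ t ∈ A, i ∉ t)
    (hB : ∀ i : ℕ+, (∃ t ∈ T, i ∈ t) → ∃ t ∈ B, i ∉ t) : ¬ Special T := by
  rintro ⟨a, b, c, hab, hac, hbc, t1, t2, t3, hT, a1, b1, c1, a2, b2, c2, a3, b3, c3⟩
  generalize Multiset.card T - 3 = m at hT
  have m1 : t1 ∈ T := by rw [hT]; simp
  have m2 : t2 ∈ T := by rw [hT]; simp
  have m3 : t3 ∈ T := by rw [hT]; simp
  have mem : ∀ t ∈ T, t = {a, b, c} ∨ t = t1 ∨ t = t2 ∨ t = t3 := by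
    intro t h
    rw [hT] at h
    simp only [Multiset.mem_add, Multiset.insert_eq_cons, Multiset.mem_cons,
      Multiset.mem_singleton] at h
    rcases h with h | h
    · exact Or.inl (Multiset.eq_of_mem_replicate h)
    · exact Or.inr h
  have two : ∀ C : Multiset (Finset ℕ+), C ≤ T →
      (∀ i : ℕ+, (∃ t ∈ T, i ∈ t) → ∃ t ∈ C, i ∉ t) →
      (t1 ∈ C ∨ t2 ∈ C) ∧ (t1 ∈ C ∨ t3 ∈ C) ∧ (t2 ∈ C ∨ t3 ∈ C) := by
    intro C hC h
    obtain ⟨u, hu, hu'⟩ := h a ⟨t1, m1, a1⟩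
    obtain ⟨v, hv, hv'⟩ := h b ⟨t2, m2, b2⟩
    obtain ⟨w, hw, hw'⟩ := h c ⟨t3, m3, c3⟩
    have e1 := mem u (Multiset.mem_of_le hC hu)
    have e2 := mem v (Multiset.mem_of_le hC hv)
    have e3 := mem w (Multiset.mem_of_le hC hw)
    clear hT mem m1 m2 m3 h hC hA hB hAB
    refine ⟨?_, ?_, ?_⟩
    · rcases e3 with rfl | rfl | rfl | rfl <;> simp_all
    · rcases e2 with rfl | rfl | rfl | rfl <;> simp_all
    · rcases e1 with rfl | rfl | rfl | rfl <;> simp_all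
  have tA := two A (le_trans (Multiset.le_add_right A B) hAB) hA
  have tB := two B (le_trans (Multiset.le_add_left B A) hAB) hB
  have d12 : t1 ≠ t2 := by rintro rfl; exact a2 a1
  have d13 : t1 ≠ t3 := by rintro rfl; exact a3 a1
  have d23 : t2 ≠ t3 := by rintro rfl; exact b3 b2
  have n1 : ({a, b, c} : Finset ℕ+) ≠ t1 := by rintro rfl; simp at b1
  have n2 : ({a, b, c} : Finset ℕ+) ≠ t2 := by rintro rfl; simp at a2
  have n3 : ({a, b, c} : Finset ℕ+) ≠ t3 := by rintro rfl; simp at a3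
  have cnt : ∀ u, u ∈ A → u ∈ B → 2 ≤ Multiset.count u T := by
    intro u h1 h2
    have := Multiset.count_le_of_le u hAB
    rw [Multiset.count_add] at this
    have := Multiset.count_pos.2 h1
    have := Multiset.count_pos.2 h2
    omega
  have k1 : Multiset.count t1 T = 1 := by
    rw [hT]; simp [Multiset.count_replicate, Multiset.count_cons, Multiset.count_singleton, n1, d12, d13]
  have k2 : Multiset.count t2 T = 1 := by
    rw [hT]; simp [Multiset.count_replicate, Multiset.count_cons, Multiset.count_singleton, n2, d12.symm, d23]
  have k3 : Multiset.count t3 T = 1 := by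
    rw [hT]; simp [Multiset.count_replicate, Multiset.count_cons, Multiset.count_singleton, n3, d13.symm, d23.symm]
  have q1 := cnt t1
  have q2 := cnt t2
  have q3 := cnt t3
  rw [k1] at q1
  rw [k2] at q2
  rw [k3] at q3
  have r1 : t1 ∈ A → t1 ∉ B := fun x y => absurd (q1 x y) (by omega)
  have r2 : t2 ∈ A → t2 ∉ B := fun x y => absurd (q2 x y) (by omega)
  have r3 : t3 ∈ A → t3 ∉ B := fun x y => absurd (q3 x y) (by omega)
  clear q1 q2 q3 k1 k2 k3 cnt two mem hA hB hAB hT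
  obtain ⟨x1, x2, x3⟩ := tA
  obtain ⟨y1, y2, y3⟩ := tB
  by_cases p1 : t1 ∈ A
  · have p1' := r1 p1
    have p2 := y1.resolve_left p1'
    have p3 := y2.resolve_left p1'
    rcases x3 with h | h
    · exact r2 h p2
    · exact r3 h p3
  · have p2 := r2 (x1.resolve_left p1)
    have p3 := r3 (x2.resolve_left p1)
    exact y3.elim p2 p3

theorem npc_fair (T : Multiset (Finset ℕ+)) (A B : Multiset (Finset ℕ+)) (hAB : A + B ≤ T)
    (hA : ∀ i : ℕ+, (∃ t ∈ T, i ∈ t) → ∃ t ∈ A, i ∉ t)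
    (hB : ∀ i : ℕ+, (∃ t ∈ T, i ∈ t) → ∃ t ∈ B, i ∉ t) : CFair 2 T := by
  intro i hi
  obtain ⟨u, hu, hu'⟩ := hA i hi
  obtain ⟨v, hv, hv'⟩ := hB i hi
  have h1 := Multiset.card_le_card (Multiset.filter_le_filter (fun t => i ∉ t) hAB)
  rw [Multiset.filter_add, Multiset.card_add] at h1
  have h2 : 0 < Multiset.card (A.filter (fun t => i ∉ t)) :=
    Multiset.card_pos_iff_exists_mem.2 ⟨u, Multiset.mem_filter.2 ⟨hu, hu'⟩⟩
  have h3 : 0 < Multiset.card (B.filter (fun t => i ∉ t)) :=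
    Multiset.card_pos_iff_exists_mem.2 ⟨v, Multiset.mem_filter.2 ⟨hv, hv'⟩⟩
  omega

theorem npc_indexed {ι : Type} [Fintype ι] (t : ι → Finset ℕ+) (T : Multiset (Finset ℕ+))
    (hTt : (Finset.univ : Finset ι).val.map t = T)
    (hT : ∀ u ∈ T, u.card = 3) (hn : 6 ≤ Multiset.card T) (hfair : CFair 2 T)
    (hsp : ¬ Special T) :
    ∃ f : Fin 2 → Multiset (Finset ℕ+),
        NicePartialColoring 2 T f ∧ ∀ j, Multiset.card (f j) ≤ 4 := by
  classical
  have hmem : ∀ j, t j ∈ T := fun j => by rw [← hTt]; exact Multiset.mem_map_of_mem _ (Finset.mem_univ j)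
  have hcard : Fintype.card ι = Multiset.card T := by
    rw [← hTt, Multiset.card_map]; rfl
  have ht : ∀ j, (t j).card = 3 := fun j => hT _ (hmem j)
  have good : NpcGood t := by
    refine npc_core t ht (by omega) ?_ ?_
    · intro x k
      by_contra hcon
      push Not at hcon
      by_cases hx : ∃ u ∈ T, x ∈ u
      · have h1 := hfair x hx
        rw [← hTt, Multiset.filter_map, Multiset.card_map] at h1
        have h2 : (Finset.univ.filter (fun j => x ∉ t j)) ⊆ {k} := by
          intro j hj
          simp only [Finset.mem_filter, Finset.mem_univ, true_and] at hj
          rw [Finset.mem_singleton]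
          by_contra hjk
          exact hj (hcon j hjk)
        have h3 := Finset.card_le_card h2
        rw [Finset.card_singleton] at h3
        have h4 : (Finset.univ.filter (fun j => x ∉ t j)).card =
          Multiset.card (Multiset.filter ((fun u => x ∉ u) ∘ t) (Finset.univ : Finset ι).val) := rfl
        omega
      · obtain ⟨j, hj⟩ := Fintype.exists_ne_of_one_lt_card (by omega) k
        exact hx ⟨t j, hmem j, hcon j hj⟩
    · rintro ⟨a, b, c, j1, j2, j3, hab, hac, hbc, h12, h13, h23, hall, h⟩
      refine hsp ⟨a, b, c, hab, hac, hbc, t j1, t j2, t j3, ?_, h⟩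
      have hu : (Finset.univ : Finset ι).val =
          (Finset.univ \ {j1, j2, j3} : Finset ι).val + ({j1, j2, j3} : Multiset ι) := by
        have e1 : ({j1, j2, j3} : Multiset ι) = ({j1, j2, j3} : Finset ι).val := by
          rw [Finset.insert_val_of_notMem (by simp [h12, h13]),
            Finset.insert_val_of_notMem (by simp [h23])]
          rfl
        rw [e1, Finset.sdiff_val]
        exact (tsub_add_cancel_of_le (Finset.val_le_iff.2 (Finset.subset_univ _))).symm
      have hm : T = (Finset.univ \ {j1, j2, j3} : Finset ι).val.map t + {t j1, t j2, t j3} := by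
        rw [← hTt, hu, Multiset.map_add]
        rfl
      have hr : (Finset.univ \ {j1, j2, j3} : Finset ι).val.map t =
          Multiset.replicate (Multiset.card T - 3) {a, b, c} := by
        rw [Multiset.eq_replicate]
        constructor
        · have := congrArg Multiset.card hm
          rw [Multiset.card_add] at this
          have h3 : Multiset.card ({t j1, t j2, t j3} : Multiset (Finset ℕ+)) = 3 := rfl
          omega
        · intro u hu
          obtain ⟨j, hj, rfl⟩ := Multiset.mem_map.1 hu
          have hj' : j ∈ (Finset.univ \ {j1, j2, j3} : Finset ι) := hj
          simp at hj'
          exact hall j hj'.1 hj'.2.1 hj'.2.2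
      rw [hr] at hm
      exact hm
  obtain ⟨S, hS⟩ := good
  obtain ⟨A, hAS, hA4, hA⟩ := npc_small t ht S (fun x => (hS x).1)
  obtain ⟨B, hBS, hB4, hB⟩ := npc_small t ht (fun j => ¬ S j) (fun x => (hS x).2)
  have hd : Disjoint A B := Finset.disjoint_left.2 fun j h1 h2 => hBS j h2 (hAS j h1)
  refine ⟨![A.val.map t, B.val.map t], ⟨?_, ?_⟩, ?_⟩
  · rw [Fin.sum_univ_two]
    change A.val.map t + B.val.map t ≤ T
    rw [← hTt, ← Multiset.map_add]
    apply Multiset.map_le_map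
    have : A.val + B.val = (A.disjUnion B hd).val := rfl
    rw [this]
    exact Finset.val_le_iff.2 (Finset.subset_univ _)
  · intro j i _
    fin_cases j
    · obtain ⟨k, hk, hk'⟩ := hA i
      exact ⟨t k, Multiset.mem_map_of_mem t hk, hk'⟩
    · obtain ⟨k, hk, hk'⟩ := hB i
      exact ⟨t k, Multiset.mem_map_of_mem t hk, hk'⟩
  · intro j
    fin_cases j
    · change Multiset.card (A.val.map t) ≤ 4
      rw [Multiset.card_map]; exact hA4
    · change Multiset.card (B.val.map t) ≤ 4
      rw [Multiset.card_map]; exact hB4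

/-- A finite multiset of `n ≥ 6` triples admits a nice partial 2-coloring coloring at
most `4` triples with each of the two colors if and only if it is fair and
non-special. -/
theorem nice_partial_two_coloring_four_iff
    (T : Multiset (Finset ℕ+)) (hT : ∀ t ∈ T, t.card = 3)
    (hn : 6 ≤ Multiset.card T) :
    (∃ f : Fin 2 → Multiset (Finset ℕ+),
        NicePartialColoring 2 T f ∧ ∀ j, Multiset.card (f j) ≤ 4) ↔
      (CFair 2 T ∧ ¬ Special T) := by
  constructor
  · rintro ⟨f, ⟨h1, h2⟩, -⟩
    rw [Fin.sum_univ_two] at h1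
    exact ⟨npc_fair T _ _ h1 (h2 0) (h2 1), npc_not_special T _ _ h1 (h2 0) (h2 1)⟩
  · rintro ⟨h1, h2⟩
    exact npc_indexed (fun j : T => (j : Finset ℕ+)) T (Multiset.map_univ_coe T) hT hn h1 h2
end

section
/- A finite multiset of n ≥ 8 triples admits a nice partial 2-coloring that colors exactly 4 triples with each of the two colors if and only if the multiset is fair and non-special. -/
/-! ### Auxiliary notions -/

/-- No element is common to all members of `A`. -/
def EmptyInter (A : Multiset (Finset ℕ+)) : Prop := ∀ i : ℕ+, ∃ t ∈ A, i ∉ t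

/-- `T` contains two disjoint submultisets, each with empty intersection. -/
def Splits2 (T : Multiset (Finset ℕ+)) : Prop :=
  ∃ A B : Multiset (Finset ℕ+), A + B ≤ T ∧ EmptyInter A ∧ EmptyInter B

theorem Splits2.mono {S T : Multiset (Finset ℕ+)} (h : S ≤ T) (hS : Splits2 S) : Splits2 T := by
  obtain ⟨A, B, hAB, hA, hB⟩ := hS
  exact ⟨A, B, hAB.trans h, hA, hB⟩

theorem exists_three {s : Finset ℕ+} (h : s.card = 3) :
    ∃ a b c : ℕ+, ∀ i, i ∈ s ↔ i = a ∨ i = b ∨ i = c := by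
  obtain ⟨a, b, c, -, -, -, rfl⟩ := Finset.card_eq_three.1 h
  exact ⟨a, b, c, by simp⟩

/-- An intersection-free multiset of triples has an intersection-free part of size at most 4. -/
theorem trim {A : Multiset (Finset ℕ+)} (hA : EmptyInter A) (h3 : ∀ t ∈ A, t.card = 3) :
    ∃ A' ≤ A, EmptyInter A' ∧ Multiset.card A' ≤ 4 := by
  obtain ⟨s, hs, -⟩ := hA 1
  obtain ⟨a, b, c, habc⟩ := exists_three (h3 s hs)
  obtain ⟨x, hx, hax⟩ := hA a
  obtain ⟨y, hy, hby⟩ := hA b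
  obtain ⟨z, hz, hcz⟩ := hA c
  refine ⟨(({s, x, y, z} : Finset (Finset ℕ+))).val, ?_, ?_, ?_⟩
  · rw [Finset.val_le_iff_val_subset]
    intro t ht
    simp only [Finset.mem_val, Finset.mem_insert, Finset.mem_singleton] at ht
    rcases ht with rfl | rfl | rfl | rfl <;> assumption
  · intro i
    simp only [Finset.mem_val, Finset.mem_insert, Finset.mem_singleton]
    by_cases hi : i ∈ s
    · rcases (habc i).1 hi with rfl | rfl | rfl
      · exact ⟨x, by simp, hax⟩
      · exact ⟨y, by simp, hby⟩
      · exact ⟨z, by simp, hcz⟩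
    · exact ⟨s, by simp, hi⟩
  · exact Finset.card_le_four

theorem EmptyInter.mono {A B : Multiset (Finset ℕ+)} (h : A ≤ B) (hA : EmptyInter A) :
    EmptyInter B := fun i => by
  obtain ⟨t, ht, hi⟩ := hA i
  exact ⟨t, Multiset.mem_of_le h ht, hi⟩

theorem exists_mid_card {A T : Multiset (Finset ℕ+)} (h : A ≤ T) (n : ℕ)
    (h1 : Multiset.card A ≤ n) (h2 : n ≤ Multiset.card T) :
    ∃ B, A ≤ B ∧ B ≤ T ∧ Multiset.card B = n := by
  obtain ⟨C, rfl⟩ := Multiset.le_iff_exists_add.1 h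
  rw [Multiset.card_add] at h2
  obtain ⟨D, hD, hc⟩ : ∃ D ≤ C, Multiset.card D = n - Multiset.card A := by
    induction C using Quotient.inductionOn with
    | h l =>
      refine ⟨((l.take (n - Multiset.card A) : List _) : Multiset _),
        (List.take_sublist _ l).subperm, ?_⟩
      simp at h2 ⊢
      omega
  refine ⟨A + D, Multiset.le_add_right _ _, by gcongr, ?_⟩
  rw [Multiset.card_add, hc]; omega

theorem coloring_of_splits2 {T : Multiset (Finset ℕ+)} (hT : ∀ t ∈ T, t.card = 3)
    (hn : 8 ≤ Multiset.card T) (h : Splits2 T) :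
    ∃ f : Fin 2 → Multiset (Finset ℕ+),
        NicePartialColoring 2 T f ∧ ∀ j, Multiset.card (f j) = 4 := by
  obtain ⟨A, B, hAB, hA, hB⟩ := h
  have hAT : A ≤ T := (Multiset.le_add_right _ _).trans hAB
  have hBT : B ≤ T := (Multiset.le_add_left _ _).trans hAB
  obtain ⟨A1, hA1, hAE, hAc⟩ := trim hA (fun t ht => hT t (Multiset.mem_of_le hAT ht))
  obtain ⟨B1, hB1, hBE, hBc⟩ := trim hB (fun t ht => hT t (Multiset.mem_of_le hBT ht))
  have h1 : A1 + B1 ≤ T := (add_le_add hA1 hB1).trans hAB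
  obtain ⟨C, rfl⟩ := Multiset.le_iff_exists_add.1 h1
  simp only [Multiset.card_add] at hn
  obtain ⟨A2, hA2, hA2', hA2c⟩ := exists_mid_card (A := A1) (T := A1 + C)
    (Multiset.le_add_right _ _) 4 hAc (by rw [Multiset.card_add]; omega)
  obtain ⟨D, hD⟩ := Multiset.le_iff_exists_add.1 hA2'
  have hcard := congrArg Multiset.card hD
  simp only [Multiset.card_add] at hcard
  obtain ⟨B2, hB2, hB2', hB2c⟩ := exists_mid_card (A := B1) (T := B1 + D)
    (Multiset.le_add_right _ _) 4 hBc (by rw [Multiset.card_add]; omega)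
  have hsum : A2 + B2 ≤ A1 + B1 + C := by
    calc A2 + B2 ≤ A2 + (B1 + D) := by gcongr
      _ = (A2 + D) + B1 := by abel
      _ = (A1 + C) + B1 := by rw [hD]
      _ = A1 + B1 + C := by abel
  refine ⟨![A2, B2], ⟨by simpa using hsum, ?_⟩, ?_⟩
  · intro j i _
    fin_cases j
    · exact hAE.mono hA2 i
    · exact hBE.mono hB2 i
  · intro j
    fin_cases j
    · exact hA2c
    · exact hB2c

/-! ### The easy direction -/

theorem fair_of_coloring {T : Multiset (Finset ℕ+)} {f : Fin 2 → Multiset (Finset ℕ+)}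
    (hf : NicePartialColoring 2 T f) : CFair 2 T := by
  intro i hi
  obtain ⟨hle, h⟩ := hf
  rw [Fin.sum_univ_two] at hle
  obtain ⟨s, hs, his⟩ := h 0 i hi
  obtain ⟨t, ht, hit⟩ := h 1 i hi
  have hle2 := Multiset.card_le_card (Multiset.filter_le_filter (fun t => i ∉ t) hle)
  rw [Multiset.filter_add, Multiset.card_add] at hle2
  have h1 : 0 < Multiset.card ((f 0).filter (fun t => i ∉ t)) :=
    Multiset.card_pos_iff_exists_mem.2 ⟨s, Multiset.mem_filter.2 ⟨hs, his⟩⟩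
  have h2 : 0 < Multiset.card ((f 1).filter (fun t => i ∉ t)) :=
    Multiset.card_pos_iff_exists_mem.2 ⟨t, Multiset.mem_filter.2 ⟨ht, hit⟩⟩
  omega

theorem not_special_of_coloring {T : Multiset (Finset ℕ+)} {f : Fin 2 → Multiset (Finset ℕ+)}
    (hn : 8 ≤ Multiset.card T)
    (hf : NicePartialColoring 2 T f) : ¬ Special T := by
  rintro ⟨a, b, c, hab, hac, hbc, t₁, t₂, t₃, hT, h1a, h1b, h1c, h2a, h2b, h2c, h3a, h3b, h3c⟩
  obtain ⟨hle, h⟩ := hf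
  rw [Fin.sum_univ_two] at hle
  have hmem : ({a, b, c} : Finset ℕ+) ∈ T := by
    rw [hT]
    refine Multiset.mem_add.2 (Or.inl (Multiset.mem_replicate.2 ⟨by omega, rfl⟩))
  have key : ∀ j, f j ≤ T → 2 ≤ Multiset.card ((f j).filter (fun t => t ≠ {a, b, c})) := by
    intro j hj
    have hx : ∀ e ∈ ({a, b, c} : Finset ℕ+),
        ∃ u ∈ (f j).filter (fun t => t ≠ {a, b, c}), e ∉ u := by
      intro e he
      obtain ⟨u, hu, heu⟩ := h j e ⟨_, hmem, he⟩
      refine ⟨u, Multiset.mem_filter.2 ⟨hu, ?_⟩, heu⟩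
      rintro rfl
      exact heu he
    obtain ⟨u, hu, hau⟩ := hx a (by simp)
    obtain ⟨v, hv, hbv⟩ := hx b (by simp)
    obtain ⟨w, hw, hcw⟩ := hx c (by simp)
    by_contra hlt
    have hpos := Multiset.card_pos_iff_exists_mem.2 ⟨u, hu⟩
    obtain ⟨z, hz⟩ := Multiset.card_eq_one.1 (show Multiset.card ((f j).filter (fun t => t ≠ {a, b, c})) = 1 by omega)
    rw [hz, Multiset.mem_singleton] at hu hv hw
    subst hu hv hw
    have hz2 : w ∈ (f j).filter (fun t => t ≠ {a, b, c}) := by rw [hz]; simp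
    rw [Multiset.mem_filter] at hz2
    have hz3 := Multiset.mem_of_le hj hz2.1
    rw [hT, Multiset.mem_add, Multiset.mem_replicate] at hz3
    simp only [Multiset.insert_eq_cons, Multiset.mem_cons, Multiset.mem_singleton] at hz3
    rcases hz3 with hz3 | rfl | rfl | rfl
    · exact hz2.2 hz3.2
    all_goals contradiction
  have k0 := key 0 ((Multiset.le_add_right _ _).trans hle)
  have k1 := key 1 ((Multiset.le_add_left _ _).trans hle)
  have hle2 := Multiset.card_le_card (Multiset.filter_le_filter (fun t => t ≠ {a, b, c}) hle)
  rw [Multiset.filter_add, Multiset.card_add] at hle2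
  have h3 : Multiset.card (T.filter (fun t => t ≠ {a, b, c})) ≤ 3 := by
    rw [hT, Multiset.filter_add, Multiset.card_add]
    have e1 : (Multiset.replicate (Multiset.card T - 3) ({a, b, c} : Finset ℕ+)).filter
        (fun t => t ≠ {a, b, c}) = 0 := by
      rw [Multiset.filter_eq_nil]
      intro x hx
      simp [Multiset.eq_of_mem_replicate hx]
    rw [e1]
    have := Multiset.card_le_card (Multiset.filter_le (fun t => t ≠ ({a, b, c} : Finset ℕ+)) {t₁, t₂, t₃})
    simpa using this
  omega

/-! ### Two elements of maximal frequency -/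

theorem pairs_or {S : Multiset (Finset ℕ+)} (h : 4 ≤ Multiset.card S) :
    (∃ u v u' v' R, S = u ::ₘ v ::ₘ u' ::ₘ v' ::ₘ R ∧ u ≠ v ∧ u' ≠ v') ∨
    (∃ x m, S = Multiset.replicate (m + 4) x) ∨
    (∃ x y m, S = y ::ₘ Multiset.replicate (m + 3) x ∧ y ≠ x) := by
  have alleq : ∀ R : Multiset (Finset ℕ+), 0 < Multiset.card R →
      (∃ x, R = Multiset.replicate (Multiset.card R) x) ∨
      ∃ u v R', R = u ::ₘ v ::ₘ R' ∧ u ≠ v := by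
    intro R hR
    obtain ⟨x, hx⟩ := Multiset.card_pos_iff_exists_mem.1 hR
    by_cases hall : ∀ y ∈ R, y = x
    · exact Or.inl ⟨x, Multiset.eq_replicate_card.2 hall⟩
    · push Not at hall
      obtain ⟨y, hy, hyx⟩ := hall
      obtain ⟨R1, rfl⟩ := Multiset.exists_cons_of_mem hx
      have hy1 : y ∈ R1 := by
        rcases Multiset.mem_cons.1 hy with h | h
        · exact absurd h hyx
        · exact h
      obtain ⟨R2, rfl⟩ := Multiset.exists_cons_of_mem hy1
      exact Or.inr ⟨x, y, R2, rfl, fun e => hyx e.symm⟩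
  rcases alleq S (by omega) with ⟨x, hx⟩ | ⟨u, v, R, rfl, huv⟩
  · refine Or.inr (Or.inl ⟨x, Multiset.card S - 4, ?_⟩)
    rw [Nat.sub_add_cancel h]; exact hx
  · simp only [Multiset.card_cons] at h
    rcases alleq R (by omega) with ⟨x, hx⟩ | ⟨u', v', R', rfl, huv'⟩
    · obtain ⟨m, hm⟩ : ∃ m, Multiset.card R = m + 2 := ⟨Multiset.card R - 2, by omega⟩
      rw [hm] at hx
      by_cases hu : u = x
      · refine Or.inr (Or.inr ⟨x, v, m, ?_, fun e => huv (hu.trans e.symm)⟩)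
        rw [hx, hu, Multiset.cons_swap]; rfl
      · by_cases hv : v = x
        · refine Or.inr (Or.inr ⟨x, u, m, ?_, hu⟩)
          rw [hx, hv]; rfl
        · refine Or.inl ⟨u, x, v, x, Multiset.replicate m x, ?_, hu, hv⟩
          rw [hx, Multiset.replicate_succ, Multiset.replicate_succ, Multiset.cons_swap v x]
    · exact Or.inl ⟨u, v, u', v', R', rfl, huv, huv'⟩

theorem eq_of_pair {a b : ℕ+} (hab : a ≠ b) {u v : Finset ℕ+} (hu : u.card = 3) (hv : v.card = 3)
    (hau : a ∈ u) (hbu : b ∈ u) (hav : a ∈ v) (hbv : b ∈ v) (huv : u ≠ v) :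
    ∀ i, i ∈ u → i ∈ v → i = a ∨ i = b := by
  intro i hiu hiv
  by_contra hne
  push Not at hne
  have hc : ({a, b, i} : Finset ℕ+).card = 3 :=
    Finset.card_eq_three.2 ⟨a, b, i, hab, hne.1.symm, hne.2.symm, rfl⟩
  have h1 : ({a, b, i} : Finset ℕ+) = u :=
    Finset.eq_of_subset_of_card_le (by intro j; simp; rintro (rfl | rfl | rfl) <;> assumption)
      (by omega)
  have h2 : ({a, b, i} : Finset ℕ+) = v :=
    Finset.eq_of_subset_of_card_le (by intro j; simp; rintro (rfl | rfl | rfl) <;> assumption)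
      (by omega)
  exact huv (h1.symm.trans h2)

theorem third {a b : ℕ+} (hab : a ≠ b) {x : Finset ℕ+} (hx : x.card = 3)
    (ha : a ∈ x) (hb : b ∈ x) : ∃ c, c ≠ a ∧ c ≠ b ∧ x = {a, b, c} := by
  have h1 : ((x.erase a).erase b).card = 1 := by
    rw [Finset.card_erase_of_mem (by simp [hab.symm, hb]), Finset.card_erase_of_mem ha]; omega
  obtain ⟨c, hc⟩ := Finset.card_eq_one.1 h1
  have hc' : c ∈ (x.erase a).erase b := by rw [hc]; simp
  simp only [Finset.mem_erase] at hc'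
  refine ⟨c, hc'.2.1, hc'.1, ?_⟩
  ext i
  have := congrArg (fun s => i ∈ s) hc
  simp only [Finset.mem_erase, Finset.mem_singleton, eq_iff_iff] at this
  simp only [Finset.mem_insert, Finset.mem_singleton]
  grind

theorem emptyInter_iff_not {A : Multiset (Finset ℕ+)} :
    EmptyInter A ↔ ∀ i, ¬ ∀ t ∈ A, i ∈ t := by
  unfold EmptyInter; push Not; rfl

theorem splits_of_le {T A B : Multiset (Finset ℕ+)} (h : A + B ≤ T)
    (hA : ∀ i, ¬ ∀ t ∈ A, i ∈ t) (hB : ∀ i, ¬ ∀ t ∈ B, i ∈ t) : Splits2 T :=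
  ⟨A, B, h, emptyInter_iff_not.2 hA, emptyInter_iff_not.2 hB⟩

/-! ### Base case: counting balanced splits of eight triples -/

theorem bad_le (m : Finset (Fin 8)) (hm : 2 ≤ m.card) :
    ((Finset.powersetCard 4 (Finset.univ : Finset (Fin 8))).filter
      (fun A => m ⊆ A ∨ Disjoint m A)).card ≤
      2 * (8 - m.card) + if m.card = 2 then 18 else 0 := by
  have hsub : (Finset.powersetCard 4 (Finset.univ : Finset (Fin 8))).filter
      (fun A => m ⊆ A ∨ Disjoint m A) ⊆
      (Finset.powersetCard 4 mᶜ).image compl ∪ Finset.powersetCard 4 mᶜ := by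
    intro A hA
    rw [Finset.mem_filter, Finset.mem_powersetCard] at hA
    rw [Finset.mem_union, Finset.mem_image]
    rcases hA.2 with h | h
    · left
      refine ⟨Aᶜ, Finset.mem_powersetCard.2 ⟨Finset.compl_subset_compl.2 h, ?_⟩, compl_compl A⟩
      rw [Finset.card_compl, hA.1.2]; rfl
    · right
      refine Finset.mem_powersetCard.2 ⟨?_, hA.1.2⟩
      intro j hj
      rw [Finset.mem_compl]
      exact fun hjm => Finset.disjoint_left.1 h hjm hj
  have h1 := (Finset.card_le_card hsub).trans (Finset.card_union_le _ _)
  have h2 := (Finset.card_image_le (s := Finset.powersetCard 4 mᶜ) (f := compl))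
  have h3 : (Finset.powersetCard 4 mᶜ).card = (8 - m.card).choose 4 := by
    rw [Finset.card_powersetCard, Finset.card_compl, Fintype.card_fin]
  have h4 : m.card ≤ 8 := by simpa using Finset.card_le_univ m
  have h5 : 2 * (8 - m.card).choose 4 ≤ 2 * (8 - m.card) + if m.card = 2 then 18 else 0 := by
    generalize m.card = k at *
    interval_cases k <;> decide
  omega

theorem splits_eight (g : Fin 8 → Finset ℕ+) (h3 : ∀ j, (g j).card = 3)
    (hfair : ∀ i, (∃ j, i ∈ g j) → 2 ≤ (Finset.univ.filter (fun j => i ∉ g j)).card)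
    (hk : ∀ a b, (Finset.univ.filter (fun j => a ∉ g j)).card = 2 →
      (Finset.univ.filter (fun j => b ∉ g j)).card = 2 → a = b) :
    Splits2 (Finset.univ.val.map g) := by
  set U : Finset ℕ+ := Finset.univ.biUnion g with hU
  have hmemU : ∀ i, i ∈ U ↔ ∃ j, i ∈ g j := by intro i; simp [hU]
  let M : ℕ+ → Finset (Fin 8) := fun i => Finset.univ.filter (fun j => i ∉ g j)
  have hcompl : ∀ i, 8 - (M i).card = (Finset.univ.filter (fun j => i ∈ g j)).card := by
    intro i
    have := Finset.card_filter_add_card_filter_not (s := (Finset.univ : Finset (Fin 8)))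
      (fun j => i ∈ g j)
    simp only [Finset.card_univ, Fintype.card_fin] at this
    simp only [M]; omega
  have hsum : ∑ i ∈ U, (8 - (M i).card) = 24 := by
    calc ∑ i ∈ U, (8 - (M i).card)
        = ∑ i ∈ U, ∑ j : Fin 8, if i ∈ g j then 1 else 0 := by
          refine Finset.sum_congr rfl fun i _ => ?_
          rw [hcompl, Finset.card_filter]
      _ = ∑ j : Fin 8, ∑ i ∈ U, if i ∈ g j then 1 else 0 := Finset.sum_comm
      _ = ∑ j : Fin 8, 3 := by
          refine Finset.sum_congr rfl fun j _ => ?_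
          rw [← Finset.card_filter, ← h3 j]
          congr 1
          ext i
          rw [Finset.mem_filter, hmemU]
          exact ⟨fun h => h.2, fun h => ⟨⟨j, h⟩, h⟩⟩
      _ = 24 := by simp
  have hexc : ∑ i ∈ U, (if (M i).card = 2 then 18 else 0) ≤ 18 := by
    rw [← Finset.sum_filter, Finset.sum_const]
    have : (U.filter (fun i => (M i).card = 2)).card ≤ 1 := by
      rw [Finset.card_le_one]
      intro a ha b hb
      exact hk a b (Finset.mem_filter.1 ha).2 (Finset.mem_filter.1 hb).2
    simp only [smul_eq_mul]; omega
  let bad : ℕ+ → Finset (Finset (Fin 8)) := fun i =>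
    (Finset.powersetCard 4 (Finset.univ : Finset (Fin 8))).filter
      (fun A => M i ⊆ A ∨ Disjoint (M i) A)
  have hbad : (U.biUnion bad).card < (Finset.powersetCard 4 (Finset.univ : Finset (Fin 8))).card := by
    have h70 : (Finset.powersetCard 4 (Finset.univ : Finset (Fin 8))).card = 70 := by
      rw [Finset.card_powersetCard]; simp; decide
    have : (U.biUnion bad).card ≤
        ∑ i ∈ U, (2 * (8 - (M i).card) + if (M i).card = 2 then 18 else 0) :=
      Finset.card_biUnion_le.trans (Finset.sum_le_sum fun i hi =>
        bad_le (M i) (hfair i ((hmemU i).1 hi)))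
    rw [Finset.sum_add_distrib, ← Finset.mul_sum, hsum] at this
    omega
  obtain ⟨A, hA, hAbad⟩ := Finset.exists_mem_notMem_of_card_lt_card hbad
  have hAc : A.card = 4 := (Finset.mem_powersetCard.1 hA).2
  have hgood : ∀ i, (∃ j ∈ A, i ∉ g j) ∧ (∃ j ∈ Aᶜ, i ∉ g j) := by
    intro i
    by_cases hi : i ∈ U
    · have h : ¬ (M i ⊆ A ∨ Disjoint (M i) A) := fun h =>
        hAbad (Finset.mem_biUnion.2 ⟨i, hi, Finset.mem_filter.2 ⟨hA, h⟩⟩)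
      push Not at h
      obtain ⟨j, hj, hjA⟩ := Finset.not_subset.1 h.1
      obtain ⟨l, hl, hlA⟩ := Finset.not_disjoint_iff.1 h.2
      exact ⟨⟨l, hlA, (Finset.mem_filter.1 hl).2⟩,
        ⟨j, Finset.mem_compl.2 hjA, (Finset.mem_filter.1 hj).2⟩⟩
    · have hno : ∀ j, i ∉ g j := fun j hj => hi ((hmemU i).2 ⟨j, hj⟩)
      have hAcc : Aᶜ.card = 4 := by rw [Finset.card_compl, hAc]; rfl
      obtain ⟨l, hl⟩ := Finset.card_pos.1 (show 0 < A.card by omega)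
      obtain ⟨j, hj⟩ := Finset.card_pos.1 (show 0 < Aᶜ.card by omega)
      exact ⟨⟨l, hl, hno l⟩, ⟨j, hj, hno j⟩⟩
  refine ⟨A.val.map g, Aᶜ.val.map g, ?_, ?_, ?_⟩
  · rw [← Multiset.map_add]
    refine Multiset.map_le_map ?_
    have : (A.disjUnion Aᶜ disjoint_compl_right).val = A.val + Aᶜ.val := rfl
    rw [← this, Finset.val_le_iff]
    exact Finset.subset_univ _
  · intro i
    obtain ⟨j, hj, hij⟩ := (hgood i).1
    exact ⟨g j, Multiset.mem_map_of_mem g hj, hij⟩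
  · intro i
    obtain ⟨j, hj, hij⟩ := (hgood i).2
    exact ⟨g j, Multiset.mem_map_of_mem g hj, hij⟩

theorem case_two {a b : ℕ+} (hab : a ≠ b) {s t : Finset ℕ+} {S : Multiset (Finset ℕ+)}
    (hS : ∀ u ∈ S, u.card = 3 ∧ a ∈ u ∧ b ∈ u) (hc : 4 ≤ Multiset.card S)
    (hfair : CFair 2 ({s} + {t} + S))
    (has : a ∉ s) (hbs : b ∉ s) (hat : a ∉ t) (hbt : b ∉ t) :
    Splits2 ({s} + {t} + S) := by
  rcases pairs_or hc with ⟨u, v, u', v', R, rfl, huv, huv'⟩ | ⟨x, m, rfl⟩ | ⟨x, y, m, rfl, hyx⟩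
  · have e1 := eq_of_pair hab (hS u (by simp)).1 (hS v (by simp)).1 (hS u (by simp)).2.1
      (hS u (by simp)).2.2 (hS v (by simp)).2.1 (hS v (by simp)).2.2 huv
    have e2 := eq_of_pair hab (hS u' (by simp)).1 (hS v' (by simp)).1 (hS u' (by simp)).2.1
      (hS u' (by simp)).2.2 (hS v' (by simp)).2.1 (hS v' (by simp)).2.2 huv'
    refine splits_of_le (A := {s} + {u} + {v}) (B := {t} + {u'} + {v'})
      (Multiset.le_iff_exists_add.2 ⟨R, ?_⟩) ?_ ?_
    · simp only [← Multiset.singleton_add]; abel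
    · intro i hi
      simp only [Multiset.mem_add, Multiset.mem_singleton, or_imp, forall_and, forall_eq,
        Finset.mem_insert, Finset.mem_singleton] at hi
      grind only
    · intro i hi
      simp only [Multiset.mem_add, Multiset.mem_singleton, or_imp, forall_and, forall_eq,
        Finset.mem_insert, Finset.mem_singleton] at hi
      grind only
  · have hx := hS x (by simp)
    obtain ⟨c, hca, hcb, rfl⟩ := third hab hx.1 hx.2.1 hx.2.2
    have hf := hfair c ⟨{a, b, c}, by simp, by simp⟩
    have hrep : (Multiset.replicate (m + 4) ({a, b, c} : Finset ℕ+)).filter (fun t => c ∉ t) = 0 := by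
      rw [Multiset.filter_eq_nil]; intro z hz; simp [Multiset.eq_of_mem_replicate hz]
    rw [Multiset.filter_add, Multiset.filter_add, hrep] at hf
    simp only [Multiset.filter_singleton] at hf
    have hcs : c ∉ s ∧ c ∉ t := by
      by_cases h1 : c ∈ s <;> by_cases h2 : c ∈ t <;> simp [h1, h2] at hf ⊢
    refine splits_of_le (A := {s} + {{a, b, c}}) (B := {t} + {{a, b, c}})
      (Multiset.le_iff_exists_add.2 ⟨Multiset.replicate (m + 2) {a, b, c}, ?_⟩) ?_ ?_
    · simp only [Multiset.replicate_succ, ← Multiset.singleton_add]; abel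
    · intro i hi
      simp only [Multiset.mem_add, Multiset.mem_singleton, or_imp, forall_and, forall_eq,
        Finset.mem_insert, Finset.mem_singleton] at hi
      grind only
    · intro i hi
      simp only [Multiset.mem_add, Multiset.mem_singleton, or_imp, forall_and, forall_eq,
        Finset.mem_insert, Finset.mem_singleton] at hi
      grind only
  · have hx := hS x (by simp)
    have hy := hS y (by simp)
    have e1 := eq_of_pair hab hy.1 hx.1 hy.2.1 hy.2.2 hx.2.1 hx.2.2 hyx
    obtain ⟨c, hca, hcb, rfl⟩ := third hab hx.1 hx.2.1 hx.2.2
    have hcy : c ∉ y := fun h => by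
      rcases e1 c h (by simp) with h | h
      · exact hca h
      · exact hcb h
    have hf := hfair c ⟨{a, b, c}, by simp, by simp⟩
    have hrep : (Multiset.replicate (m + 3) ({a, b, c} : Finset ℕ+)).filter (fun t => c ∉ t) = 0 := by
      rw [Multiset.filter_eq_nil]; intro z hz; simp [Multiset.eq_of_mem_replicate hz]
    rw [← Multiset.singleton_add y, Multiset.filter_add, Multiset.filter_add, Multiset.filter_add, hrep] at hf
    simp only [Multiset.filter_singleton] at hf
    have hcs : c ∉ s ∨ c ∉ t := by
      by_cases h1 : c ∈ s <;> by_cases h2 : c ∈ t <;> simp [h1, h2] at hf ⊢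
      split_ifs at hf <;> simp at hf
    rcases hcs with hcs | hcs
    · refine splits_of_le (A := {s} + {{a, b, c}}) (B := {t} + {{a, b, c}} + {y})
        (Multiset.le_iff_exists_add.2 ⟨Multiset.replicate (m + 1) {a, b, c}, ?_⟩) ?_ ?_
      · simp only [Multiset.replicate_succ, ← Multiset.singleton_add]; abel
      · intro i hi
        simp only [Multiset.mem_add, Multiset.mem_singleton, or_imp, forall_and, forall_eq,
          Finset.mem_insert, Finset.mem_singleton] at hi
        grind only
      · intro i hi
        simp only [Multiset.mem_add, Multiset.mem_singleton, or_imp, forall_and, forall_eq,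
          Finset.mem_insert, Finset.mem_singleton] at hi
        grind only
    · refine splits_of_le (A := {t} + {{a, b, c}}) (B := {s} + {{a, b, c}} + {y})
        (Multiset.le_iff_exists_add.2 ⟨Multiset.replicate (m + 1) {a, b, c}, ?_⟩) ?_ ?_
      · simp only [Multiset.replicate_succ, ← Multiset.singleton_add]; abel
      · intro i hi
        simp only [Multiset.mem_add, Multiset.mem_singleton, or_imp, forall_and, forall_eq,
          Finset.mem_insert, Finset.mem_singleton] at hi
        grind only
      · intro i hi
        simp only [Multiset.mem_add, Multiset.mem_singleton, or_imp, forall_and, forall_eq,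
          Finset.mem_insert, Finset.mem_singleton] at hi
        grind only

/-- `p` misses both, `q` misses only `a`, `r` misses only `b`. -/
theorem case_one {a b : ℕ+} (hab : a ≠ b) {p q r : Finset ℕ+} {S : Multiset (Finset ℕ+)}
    (hS : ∀ u ∈ S, u.card = 3 ∧ a ∈ u ∧ b ∈ u) (hc : 4 ≤ Multiset.card S)
    (hfair : CFair 2 ({p} + {q} + {r} + S)) (hsp : ¬ Special ({p} + {q} + {r} + S))
    (hap : a ∉ p) (hbp : b ∉ p) (haq : a ∉ q) (hbq : b ∈ q) (har : a ∈ r) (hbr : b ∉ r) :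
    Splits2 ({p} + {q} + {r} + S) := by
  rcases pairs_or hc with ⟨u, v, u', v', R, rfl, huv, huv'⟩ | ⟨x, m, rfl⟩ | ⟨x, y, m, rfl, hyx⟩
  · have e1 := eq_of_pair hab (hS u (by simp)).1 (hS v (by simp)).1 (hS u (by simp)).2.1
      (hS u (by simp)).2.2 (hS v (by simp)).2.1 (hS v (by simp)).2.2 huv
    have e2 := eq_of_pair hab (hS u' (by simp)).1 (hS v' (by simp)).1 (hS u' (by simp)).2.1
      (hS u' (by simp)).2.2 (hS v' (by simp)).2.1 (hS v' (by simp)).2.2 huv'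
    refine splits_of_le (A := {p} + {u} + {v}) (B := {q} + {r} + {u'} + {v'})
      (Multiset.le_iff_exists_add.2 ⟨R, ?_⟩) ?_ ?_
    · simp only [← Multiset.singleton_add]; abel
    · intro i hi
      simp only [Multiset.mem_add, Multiset.mem_singleton, or_imp, forall_and, forall_eq,
        Finset.mem_insert, Finset.mem_singleton] at hi
      grind only
    · intro i hi
      simp only [Multiset.mem_add, Multiset.mem_singleton, or_imp, forall_and, forall_eq,
        Finset.mem_insert, Finset.mem_singleton] at hi
      grind only
  · have hx := hS x (by simp)
    obtain ⟨c, hca, hcb, rfl⟩ := third hab hx.1 hx.2.1 hx.2.2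
    have hf := hfair c ⟨{a, b, c}, by simp, by simp⟩
    have hrep : (Multiset.replicate (m + 4) ({a, b, c} : Finset ℕ+)).filter (fun t => c ∉ t) = 0 := by
      rw [Multiset.filter_eq_nil]; intro z hz; simp [Multiset.eq_of_mem_replicate hz]
    rw [Multiset.filter_add, Multiset.filter_add, Multiset.filter_add, hrep] at hf
    simp only [Multiset.filter_singleton] at hf
    have hcs : (c ∉ p ∧ (c ∉ q ∨ c ∉ r)) ∨ (c ∈ p ∧ c ∉ q ∧ c ∉ r) := by
      by_cases h1 : c ∈ p <;> by_cases h2 : c ∈ q <;> by_cases h3 : c ∈ r <;>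
        simp [h1, h2, h3] at hf ⊢
    rcases hcs with ⟨hcp, hcs⟩ | ⟨hcp, hcq, hcr⟩
    · refine splits_of_le (A := {p} + {{a, b, c}}) (B := {q} + {r} + {{a, b, c}})
        (Multiset.le_iff_exists_add.2 ⟨Multiset.replicate (m + 2) {a, b, c}, ?_⟩) ?_ ?_
      · simp only [Multiset.replicate_succ, ← Multiset.singleton_add]; abel
      · intro i hi
        simp only [Multiset.mem_add, Multiset.mem_singleton, or_imp, forall_and, forall_eq,
          Finset.mem_insert, Finset.mem_singleton] at hi
        grind only
      · intro i hi
        simp only [Multiset.mem_add, Multiset.mem_singleton, or_imp, forall_and, forall_eq,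
          Finset.mem_insert, Finset.mem_singleton] at hi
        grind only
    · refine absurd ?_ hsp
      refine ⟨a, b, c, hab, hca.symm, hcb.symm, r, q, p, ?_, har, hbr, hcr, haq, hbq, hcq,
        hap, hbp, hcp⟩
      have hcard : Multiset.card ({p} + {q} + {r} +
          Multiset.replicate (m + 4) ({a, b, c} : Finset ℕ+)) - 3 = m + 4 := by
        simp only [Multiset.card_add, Multiset.card_singleton, Multiset.card_replicate]; omega
      rw [hcard]
      simp only [Multiset.insert_eq_cons, ← Multiset.singleton_add]; abel
  · have hx := hS x (by simp)
    have hy := hS y (by simp)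
    have e1 := eq_of_pair hab hy.1 hx.1 hy.2.1 hy.2.2 hx.2.1 hx.2.2 hyx
    obtain ⟨c, hca, hcb, rfl⟩ := third hab hx.1 hx.2.1 hx.2.2
    have hcy : c ∉ y := fun h => by
      rcases e1 c h (by simp) with h | h
      · exact hca h
      · exact hcb h
    have hf := hfair c ⟨{a, b, c}, by simp, by simp⟩
    have hrep : (Multiset.replicate (m + 3) ({a, b, c} : Finset ℕ+)).filter (fun t => c ∉ t) = 0 := by
      rw [Multiset.filter_eq_nil]; intro z hz; simp [Multiset.eq_of_mem_replicate hz]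
    rw [← Multiset.singleton_add y, Multiset.filter_add, Multiset.filter_add, Multiset.filter_add,
      Multiset.filter_add, hrep] at hf
    simp only [Multiset.filter_singleton] at hf
    have hcs : c ∉ p ∨ (c ∉ q ∨ c ∉ r) := by
      by_cases h1 : c ∈ p <;> by_cases h2 : c ∈ q <;> by_cases h3 : c ∈ r <;>
        simp [h1, h2, h3] at hf ⊢
      split_ifs at hf <;> simp at hf
    rcases hcs with hcs | hcs
    · refine splits_of_le (A := {p} + {{a, b, c}}) (B := {q} + {r} + {{a, b, c}} + {y})
        (Multiset.le_iff_exists_add.2 ⟨Multiset.replicate (m + 1) {a, b, c}, ?_⟩) ?_ ?_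
      · simp only [Multiset.replicate_succ, ← Multiset.singleton_add]; abel
      · intro i hi
        simp only [Multiset.mem_add, Multiset.mem_singleton, or_imp, forall_and, forall_eq,
          Finset.mem_insert, Finset.mem_singleton] at hi
        grind only
      · intro i hi
        simp only [Multiset.mem_add, Multiset.mem_singleton, or_imp, forall_and, forall_eq,
          Finset.mem_insert, Finset.mem_singleton] at hi
        grind only
    · refine splits_of_le (A := {q} + {r} + {{a, b, c}}) (B := {p} + {{a, b, c}} + {y})
        (Multiset.le_iff_exists_add.2 ⟨Multiset.replicate (m + 1) {a, b, c}, ?_⟩) ?_ ?_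
      · simp only [Multiset.replicate_succ, ← Multiset.singleton_add]; abel
      · intro i hi
        simp only [Multiset.mem_add, Multiset.mem_singleton, or_imp, forall_and, forall_eq,
          Finset.mem_insert, Finset.mem_singleton] at hi
        grind only
      · intro i hi
        simp only [Multiset.mem_add, Multiset.mem_singleton, or_imp, forall_and, forall_eq,
          Finset.mem_insert, Finset.mem_singleton] at hi
        grind only

/-- The situation of `case_zero` when all but at most one of the remaining triples agree
and `q`, `r` can be chosen on one side. -/
theorem case_zero_aux {a b c : ℕ+} {q q' r r' : Finset ℕ+}
    {T R : Multiset (Finset ℕ+)} {y : Finset ℕ+}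
    (hT : T = {q} + {q'} + {r} + {r'} + {{a, b, c}} + {{a, b, c}} + {y} + R)
    (hq : a ∉ q) (hq' : a ∉ q') (hr : b ∉ r) (hr' : b ∉ r')
    (h1 : c ∉ q ∨ c ∉ r) (h2 : c ∉ q' ∨ c ∉ r' ∨ c ∉ y) : Splits2 T := by
  subst hT
  refine splits_of_le (A := {q} + {r} + {{a, b, c}}) (B := {q'} + {r'} + {{a, b, c}} + {y})
    (Multiset.le_iff_exists_add.2 ⟨R, ?_⟩) ?_ ?_
  · abel
  · intro i hi
    simp only [Multiset.mem_add, Multiset.mem_singleton, or_imp, forall_and, forall_eq,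
      Finset.mem_insert, Finset.mem_singleton] at hi
    grind only
  · intro i hi
    simp only [Multiset.mem_add, Multiset.mem_singleton, or_imp, forall_and, forall_eq,
      Finset.mem_insert, Finset.mem_singleton] at hi
    grind only

/-- `q, q'` miss only `a`, and `r, r'` miss only `b`. -/
theorem case_zero {a b : ℕ+} (hab : a ≠ b) {q q' r r' : Finset ℕ+} {S : Multiset (Finset ℕ+)}
    (hS : ∀ u ∈ S, u.card = 3 ∧ a ∈ u ∧ b ∈ u) (hc : 4 ≤ Multiset.card S)
    (hfair : CFair 2 ({q} + {q'} + {r} + {r'} + S))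
    (haq : a ∉ q) (haq' : a ∉ q') (hbr : b ∉ r) (hbr' : b ∉ r') :
    Splits2 ({q} + {q'} + {r} + {r'} + S) := by
  rcases pairs_or hc with ⟨u, v, u', v', R, rfl, huv, huv'⟩ | ⟨x, m, rfl⟩ | ⟨x, y, m, rfl, hyx⟩
  · have e1 := eq_of_pair hab (hS u (by simp)).1 (hS v (by simp)).1 (hS u (by simp)).2.1
      (hS u (by simp)).2.2 (hS v (by simp)).2.1 (hS v (by simp)).2.2 huv
    have e2 := eq_of_pair hab (hS u' (by simp)).1 (hS v' (by simp)).1 (hS u' (by simp)).2.1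
      (hS u' (by simp)).2.2 (hS v' (by simp)).2.1 (hS v' (by simp)).2.2 huv'
    refine splits_of_le (A := {q} + {r} + {u} + {v}) (B := {q'} + {r'} + {u'} + {v'})
      (Multiset.le_iff_exists_add.2 ⟨R, ?_⟩) ?_ ?_
    · simp only [← Multiset.singleton_add]; abel
    · intro i hi
      simp only [Multiset.mem_add, Multiset.mem_singleton, or_imp, forall_and, forall_eq,
        Finset.mem_insert, Finset.mem_singleton] at hi
      grind only
    · intro i hi
      simp only [Multiset.mem_add, Multiset.mem_singleton, or_imp, forall_and, forall_eq,
        Finset.mem_insert, Finset.mem_singleton] at hi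
      grind only
  · have hx := hS x (by simp)
    obtain ⟨c, hca, hcb, rfl⟩ := third hab hx.1 hx.2.1 hx.2.2
    have hf := hfair c ⟨{a, b, c}, by simp, by simp⟩
    have hrep : (Multiset.replicate (m + 4) ({a, b, c} : Finset ℕ+)).filter (fun t => c ∉ t) = 0 := by
      rw [Multiset.filter_eq_nil]; intro z hz; simp [Multiset.eq_of_mem_replicate hz]
    rw [Multiset.filter_add, Multiset.filter_add, Multiset.filter_add, Multiset.filter_add,
      hrep] at hf
    simp only [Multiset.filter_singleton] at hf
    have hcs : ((c ∉ q ∨ c ∉ r) ∧ (c ∉ q' ∨ c ∉ r')) ∨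
        ((c ∉ q ∨ c ∉ r') ∧ (c ∉ q' ∨ c ∉ r)) := by
      by_cases h1 : c ∈ q <;> by_cases h2 : c ∈ q' <;> by_cases h3 : c ∈ r <;>
        by_cases h4 : c ∈ r' <;> simp [h1, h2, h3, h4] at hf ⊢
    rcases hcs with ⟨h1, h2⟩ | ⟨h1, h2⟩
    · refine case_zero_aux (q := q) (q' := q') (r := r) (r' := r') (a := a) (b := b) (c := c)
        (y := {a, b, c}) (R := Multiset.replicate (m + 1) {a, b, c}) ?_ haq haq' hbr hbr' h1
        (by tauto)
      simp only [Multiset.replicate_succ, ← Multiset.singleton_add]; abel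
    · refine case_zero_aux (q := q) (q' := q') (r := r') (r' := r) (a := a) (b := b) (c := c)
        (y := {a, b, c}) (R := Multiset.replicate (m + 1) {a, b, c}) ?_ haq haq' hbr' hbr h1
        (by tauto)
      simp only [Multiset.replicate_succ, ← Multiset.singleton_add]; abel
  · have hx := hS x (by simp)
    have hy := hS y (by simp)
    have e1 := eq_of_pair hab hy.1 hx.1 hy.2.1 hy.2.2 hx.2.1 hx.2.2 hyx
    obtain ⟨c, hca, hcb, rfl⟩ := third hab hx.1 hx.2.1 hx.2.2
    have hcy : c ∉ y := fun h => by
      rcases e1 c h (by simp) with h | h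
      · exact hca h
      · exact hcb h
    have hf := hfair c ⟨{a, b, c}, by simp, by simp⟩
    have hrep : (Multiset.replicate (m + 3) ({a, b, c} : Finset ℕ+)).filter (fun t => c ∉ t) = 0 := by
      rw [Multiset.filter_eq_nil]; intro z hz; simp [Multiset.eq_of_mem_replicate hz]
    rw [← Multiset.singleton_add y, Multiset.filter_add, Multiset.filter_add, Multiset.filter_add,
      Multiset.filter_add, Multiset.filter_add, hrep] at hf
    simp only [Multiset.filter_singleton] at hf
    have hcs : (c ∉ q ∨ c ∉ r) ∨ (c ∉ q' ∨ c ∉ r') := by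
      by_cases h1 : c ∈ q <;> by_cases h2 : c ∈ q' <;> by_cases h3 : c ∈ r <;>
        by_cases h4 : c ∈ r' <;> simp [h1, h2, h3, h4, hcy] at hf ⊢
    rcases hcs with h1 | h1
    · refine case_zero_aux (q := q) (q' := q') (r := r) (r' := r') (a := a) (b := b) (c := c)
        (y := y) (R := Multiset.replicate (m + 1) {a, b, c}) ?_ haq haq' hbr hbr' h1
        (by tauto)
      simp only [Multiset.replicate_succ, ← Multiset.singleton_add]; abel
    · refine case_zero_aux (q := q') (q' := q) (r := r') (r' := r) (a := a) (b := b) (c := c)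
        (y := y) (R := Multiset.replicate (m + 1) {a, b, c}) ?_ haq' haq hbr' hbr h1
        (by tauto)
      simp only [Multiset.replicate_succ, ← Multiset.singleton_add]; abel

theorem splits_of_two {T : Multiset (Finset ℕ+)} (hT : ∀ t ∈ T, t.card = 3)
    (hn : 8 ≤ Multiset.card T) (hfair : CFair 2 T) (hsp : ¬ Special T) {a b : ℕ+} (hab : a ≠ b)
    (ha : Multiset.card (T.filter (fun t => a ∉ t)) = 2)
    (hb : Multiset.card (T.filter (fun t => b ∉ t)) = 2) : Splits2 T := by
  obtain ⟨P, hP⟩ : ∃ P, P = (T.filter (fun t => a ∉ t)).filter (fun t => b ∉ t) := ⟨_, rfl⟩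
  obtain ⟨Q, hQ⟩ : ∃ Q, Q = (T.filter (fun t => a ∉ t)).filter (fun t => ¬ b ∉ t) := ⟨_, rfl⟩
  obtain ⟨R, hR⟩ : ∃ R, R = (T.filter (fun t => ¬ a ∉ t)).filter (fun t => b ∉ t) := ⟨_, rfl⟩
  obtain ⟨S, hS⟩ : ∃ S, S = (T.filter (fun t => ¬ a ∉ t)).filter (fun t => ¬ b ∉ t) := ⟨_, rfl⟩
  have hPQ : P + Q = T.filter (fun t => a ∉ t) := by rw [hP, hQ, Multiset.filter_add_not]
  have hRS : R + S = T.filter (fun t => ¬ a ∉ t) := by rw [hR, hS, Multiset.filter_add_not]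
  have hPR : P + R = T.filter (fun t => b ∉ t) := by
    rw [hP, hR, ← Multiset.filter_add, Multiset.filter_add_not]
  have hall : T = P + Q + (R + S) := by rw [hPQ, hRS, Multiset.filter_add_not]
  have c1 : Multiset.card P + Multiset.card Q = 2 := by rw [← Multiset.card_add, hPQ, ha]
  have c2 : Multiset.card P + Multiset.card R = 2 := by rw [← Multiset.card_add, hPR, hb]
  have c3 : Multiset.card T = Multiset.card P + Multiset.card Q +
      (Multiset.card R + Multiset.card S) := by
    conv_lhs => rw [hall]
    simp only [Multiset.card_add]
  have mP : ∀ u ∈ P, a ∉ u ∧ b ∉ u := by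
    intro u hu; rw [hP] at hu; simp only [Multiset.mem_filter] at hu; tauto
  have mQ : ∀ u ∈ Q, a ∉ u ∧ b ∈ u := by
    intro u hu; rw [hQ] at hu; simp only [Multiset.mem_filter] at hu; tauto
  have mR : ∀ u ∈ R, a ∈ u ∧ b ∉ u := by
    intro u hu; rw [hR] at hu; simp only [Multiset.mem_filter] at hu; tauto
  have mS : ∀ u ∈ S, u.card = 3 ∧ a ∈ u ∧ b ∈ u := by
    intro u hu; rw [hS] at hu; simp only [Multiset.mem_filter] at hu
    exact ⟨hT u hu.1.1, by tauto, by tauto⟩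
  have hcS : 4 ≤ Multiset.card S := by omega
  clear hP hQ hR hS hPQ hRS hPR
  have hcases : Multiset.card P = 0 ∨ Multiset.card P = 1 ∨ Multiset.card P = 2 := by omega
  rcases hcases with h | h | h
  · obtain ⟨q, q', rfl⟩ := Multiset.card_eq_two.1 (show Multiset.card Q = 2 by omega)
    obtain ⟨r, r', rfl⟩ := Multiset.card_eq_two.1 (show Multiset.card R = 2 by omega)
    obtain rfl := Multiset.card_eq_zero.1 h
    have hT' : T = {q} + {q'} + {r} + {r'} + S := by
      rw [hall]; simp only [Multiset.insert_eq_cons, ← Multiset.singleton_add]; abel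
    rw [hT'] at hfair ⊢
    exact case_zero hab mS hcS hfair (mQ q (by simp)).1 (mQ q' (by simp)).1
      (mR r (by simp)).2 (mR r' (by simp)).2
  · obtain ⟨p, rfl⟩ := Multiset.card_eq_one.1 h
    obtain ⟨q, rfl⟩ := Multiset.card_eq_one.1 (show Multiset.card Q = 1 by omega)
    obtain ⟨r, rfl⟩ := Multiset.card_eq_one.1 (show Multiset.card R = 1 by omega)
    have hT' : T = {p} + {q} + {r} + S := by rw [hall]; abel
    rw [hT'] at hfair hsp ⊢
    exact case_one hab mS hcS hfair hsp (mP p (by simp)).1 (mP p (by simp)).2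
      (mQ q (by simp)).1 (mQ q (by simp)).2 (mR r (by simp)).1 (mR r (by simp)).2
  · obtain ⟨s, t, rfl⟩ := Multiset.card_eq_two.1 h
    obtain rfl := Multiset.card_eq_zero.1 (show Multiset.card Q = 0 by omega)
    obtain rfl := Multiset.card_eq_zero.1 (show Multiset.card R = 0 by omega)
    have hT' : T = {s} + {t} + S := by
      rw [hall]; simp only [Multiset.insert_eq_cons, ← Multiset.singleton_add]; abel
    rw [hT'] at hfair ⊢
    exact case_two hab mS hcS hfair (mP s (by simp)).1 (mP s (by simp)).2
      (mP t (by simp)).1 (mP t (by simp)).2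

/-! ### Induction on the number of triples -/

theorem splits_card_eight {T : Multiset (Finset ℕ+)} (hT : ∀ t ∈ T, t.card = 3)
    (hn : Multiset.card T = 8) (hfair : CFair 2 T)
    (hk : ∀ a b, Multiset.card (T.filter (fun t => a ∉ t)) = 2 →
      Multiset.card (T.filter (fun t => b ∉ t)) = 2 → a = b) : Splits2 T := by
  obtain ⟨g, hg⟩ : ∃ g : Fin 8 → Finset ℕ+, T = Finset.univ.val.map g := by
    induction T using Quotient.inductionOn with
    | h l =>
      have hl : l.length = 8 := by simpa using hn
      refine ⟨fun j => l.get (j.cast hl.symm), ?_⟩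
      rw [Fin.univ_val_map]
      have : List.ofFn (fun j : Fin 8 => l.get (j.cast hl.symm)) = l := by
        apply List.ext_get
        · simp [hl]
        · intro n h1 h2
          rw [List.get_ofFn]
          rfl
      rw [this]; rfl
  have hcard : ∀ i, Multiset.card (T.filter (fun t => i ∉ t)) =
      (Finset.univ.filter (fun j => i ∉ g j)).card := by
    intro i
    rw [hg, Multiset.filter_map, Multiset.card_map]
    rfl
  have hmem : ∀ j, g j ∈ T := fun j => by
    rw [hg]; exact Multiset.mem_map_of_mem g (Finset.mem_univ j)
  rw [hg]
  refine splits_eight g (fun j => hT _ (hmem j)) ?_ ?_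
  · rintro i ⟨j, hj⟩
    rw [← hcard]
    exact hfair i ⟨g j, hmem j, hj⟩
  · intro a b ha hb
    exact hk a b (by rw [hcard, ha]) (by rw [hcard, hb])

theorem splits_of_special_cons {T : Multiset (Finset ℕ+)} {t : Finset ℕ+} (ht : t.card = 3)
    (hn : 8 ≤ Multiset.card T) (hsp : Special T) (hnsp : ¬ Special (t ::ₘ T)) :
    Splits2 (t ::ₘ T) := by
  obtain ⟨a, b, c, hab, hac, hbc, t₁, t₂, t₃, hT, h1a, h1b, h1c, h2a, h2b, h2c, h3a, h3b, h3c⟩ := hsp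
  obtain ⟨m, hm⟩ : ∃ m, Multiset.card T - 3 = m + 2 := ⟨Multiset.card T - 5, by omega⟩
  have hne : t ≠ {a, b, c} := by
    rintro rfl
    refine hnsp ⟨a, b, c, hab, hac, hbc, t₁, t₂, t₃, ?_, h1a, h1b, h1c, h2a, h2b, h2c, h3a, h3b, h3c⟩
    have : Multiset.card (({a, b, c} : Finset ℕ+) ::ₘ T) - 3 = (Multiset.card T - 3) + 1 := by
      rw [Multiset.card_cons]; omega
    rw [this, Multiset.replicate_succ, Multiset.cons_add, ← hT]
  have hmiss : a ∉ t ∨ b ∉ t ∨ c ∉ t := by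
    by_contra hcon
    push Not at hcon
    apply hne
    symm
    apply Finset.eq_of_subset_of_card_le
    · intro j; simp only [Finset.mem_insert, Finset.mem_singleton]
      rintro (rfl | rfl | rfl) <;> tauto
    · rw [ht, Finset.card_eq_three.2 ⟨a, b, c, hab, hac, hbc, rfl⟩]
  rw [hm] at hT
  have hT' : t ::ₘ T = {t} + {{a, b, c}} + {{a, b, c}} + {t₁} + {t₂} + {t₃} +
      Multiset.replicate m {a, b, c} := by
    rw [hT]
    simp only [Multiset.replicate_succ, Multiset.insert_eq_cons, ← Multiset.singleton_add]; abel
  rw [hT']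
  rcases hmiss with h | h | h
  · refine splits_of_le (A := {t₂} + {t₃} + {{a, b, c}}) (B := {t} + {t₁} + {{a, b, c}})
      (Multiset.le_iff_exists_add.2 ⟨Multiset.replicate m {a, b, c}, by abel⟩) ?_ ?_
    all_goals
      intro i hi
      simp only [Multiset.mem_add, Multiset.mem_singleton, or_imp, forall_and, forall_eq,
        Finset.mem_insert, Finset.mem_singleton] at hi
      grind only
  · refine splits_of_le (A := {t₁} + {t₃} + {{a, b, c}}) (B := {t} + {t₂} + {{a, b, c}})
      (Multiset.le_iff_exists_add.2 ⟨Multiset.replicate m {a, b, c}, by abel⟩) ?_ ?_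
    all_goals
      intro i hi
      simp only [Multiset.mem_add, Multiset.mem_singleton, or_imp, forall_and, forall_eq,
        Finset.mem_insert, Finset.mem_singleton] at hi
      grind only
  · refine splits_of_le (A := {t₁} + {t₂} + {{a, b, c}}) (B := {t} + {t₃} + {{a, b, c}})
      (Multiset.le_iff_exists_add.2 ⟨Multiset.replicate m {a, b, c}, by abel⟩) ?_ ?_
    all_goals
      intro i hi
      simp only [Multiset.mem_add, Multiset.mem_singleton, or_imp, forall_and, forall_eq,
        Finset.mem_insert, Finset.mem_singleton] at hi
      grind only

theorem splits_main (n : ℕ) : ∀ T : Multiset (Finset ℕ+), (∀ t ∈ T, t.card = 3) →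
    Multiset.card T = n + 8 → CFair 2 T → ¬ Special T → Splits2 T := by
  induction n with
  | zero =>
    intro T hT hn hfair hsp
    by_cases hk : ∀ a b, Multiset.card (T.filter (fun t => a ∉ t)) = 2 →
      Multiset.card (T.filter (fun t => b ∉ t)) = 2 → a = b
    · exact splits_card_eight hT (by omega) hfair hk
    · push Not at hk
      obtain ⟨a, b, ha, hb, hab⟩ := hk
      exact splits_of_two hT (by omega) hfair hsp hab ha hb
  | succ n ih =>
    intro T hT hn hfair hsp
    by_cases hk : ∀ a b, Multiset.card (T.filter (fun t => a ∉ t)) = 2 →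
      Multiset.card (T.filter (fun t => b ∉ t)) = 2 → a = b
    · have hex : ∃ t ∈ T, ∀ a, Multiset.card (T.filter (fun t => a ∉ t)) = 2 → a ∈ t := by
        by_cases h2 : ∃ a, Multiset.card (T.filter (fun t => a ∉ t)) = 2
        · obtain ⟨a, ha⟩ := h2
          by_contra hcon
          push Not at hcon
          have : T.filter (fun t => a ∉ t) = T := by
            rw [Multiset.filter_eq_self]
            intro t ht
            obtain ⟨b, hb, hbt⟩ := hcon t ht
            rwa [hk a b ha hb]
          rw [this] at ha
          omega
        · push Not at h2
          obtain ⟨t, ht⟩ := Multiset.card_pos_iff_exists_mem.1 (show 0 < Multiset.card T by omega)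
          exact ⟨t, ht, fun a ha => absurd ha (h2 a)⟩
      obtain ⟨t, ht, hta⟩ := hex
      obtain ⟨T', rfl⟩ := Multiset.exists_cons_of_mem ht
      rw [Multiset.card_cons] at hn
      by_cases hsp' : Special T'
      · exact splits_of_special_cons (hT t ht) (by omega) hsp' hsp
      · refine (ih T' (fun u hu => hT u (Multiset.mem_cons_of_mem hu)) (by omega) ?_ hsp').mono
          (Multiset.le_cons_self T' t)
        rintro i ⟨u, hu, hiu⟩
        have h1 := hfair i ⟨u, Multiset.mem_cons_of_mem hu, hiu⟩
        have h2 := hta i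
        by_cases hit : i ∈ t
        · rwa [Multiset.filter_cons_of_neg (s := T') (p := fun t => i ∉ t) (by simpa using hit)] at h1
        · rw [Multiset.filter_cons_of_pos (s := T') (p := fun t => i ∉ t) hit,
            Multiset.card_cons] at h1 h2
          have h3 : Multiset.card (T'.filter (fun t => i ∉ t)) + 1 ≠ 2 := fun e => hit (h2 e)
          omega
    · push Not at hk
      obtain ⟨a, b, ha, hb, hab⟩ := hk
      exact splits_of_two hT (by omega) hfair hsp hab ha hb

/-- A finite multiset of `n ≥ 8` triples admits a nice partial 2-coloring coloring
exactly `4` triples with each of the two colors if and only if it is fair and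
non-special. -/
theorem nice_partial_two_coloring_exactly_four_iff
    (T : Multiset (Finset ℕ+)) (hT : ∀ t ∈ T, t.card = 3)
    (hn : 8 ≤ Multiset.card T) :
    (∃ f : Fin 2 → Multiset (Finset ℕ+),
        NicePartialColoring 2 T f ∧ ∀ j, Multiset.card (f j) = 4) ↔
      (CFair 2 T ∧ ¬ Special T) := by
  constructor
  · rintro ⟨f, hf, -⟩
    exact ⟨fair_of_coloring hf, not_special_of_coloring hn hf⟩
  · rintro ⟨hfair, hsp⟩
    exact coloring_of_splits2 hT hn
      (splits_main (Multiset.card T - 8) T hT (by omega) hfair hsp)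
end
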